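/- arXiv:2103.10547 — 5 statements merged into one kernel-verified Lean document; each statement's English description precedes it below -/
import Mathlib

section
/- Let d and p be positive integers. There exists a constant k (depending only on d and p) such that no collection of k distinct algebraic hypersurfaces of degree at most d in ℝ^p can be shattered by axis-aligned line segments. That is, for every collection 𝒞 of k such hypersurfaces there is a subset S ⊆ 𝒞 that is not hit by any axis-aligned line segment. -/
/-- An algebraic hypersurface of degree at most `d` in `ℝ^p`: the zero set of a
nonzero real polynomial in `p` variables of total degree at most `d`. -/
def IsAlgHypersurface (d p : ℕ) (H : Set (Fin p → ℝ)) : Prop :=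
  ∃ f : MvPolynomial (Fin p) ℝ, f ≠ 0 ∧ f.totalDegree ≤ d ∧
    H = {x : Fin p → ℝ | MvPolynomial.eval x f = 0}

/-- An axis-aligned line segment in `ℝ^p`. -/
def IsAxisSegment (p : ℕ) (s : Set (Fin p → ℝ)) : Prop :=
  ∃ (x : Fin p → ℝ) (i : Fin p) (ℓ : ℝ), 0 ≤ ℓ ∧
    s = {y : Fin p → ℝ | ∃ t ∈ Set.Icc (0 : ℝ) ℓ, y = x + t • (Pi.single i 1 : Fin p → ℝ)}

/-!
Restricting a polynomial `f` of degree at most `d` to the segment from `x` to `y` gives a univariate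
polynomial in the parameter, whose coefficients are finite sums of products of a function of `f` and
a function of `(x, y)`. By the Cohen–Hörmander method, the sign conditions realized on `[a, b]` by
finitely many univariate polynomials over a ring, specialized to `ℝ`, depend only on the signs of
finitely many elements of the ring: adjoining derivatives and pseudo-remainders allows an induction
on the degree, and the roots found for two specializations occur in the same order by Thom's lemma.

Whether `f` vanishes somewhere on a segment is therefore decided by the signs of finitely many
functions `(f, e) ↦ ∑ i, u i f * v i e`. Each of these is a pairing in a finite-dimensional space,
so it cuts `k` polynomials in at most `(k + 1) ^ n` ways by the Sauer–Shelah lemma. Hence the number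
of subsets of `k` hypersurfaces hit by segments is polynomial in `k`, and it is eventually less than
`2 ^ k`.
-/

open Polynomial Set
open SignType (sign)
open scoped TensorProduct

section RealPolynomials

variable {f g : ℝ[X]} {s t s' t' a b a' b' : ℝ}

lemma monotoneOn_eval_of_derivative_nonneg (h : ∀ x ∈ Icc s t, 0 ≤ (derivative f).eval x) :
    MonotoneOn (fun x => f.eval x) (Icc s t) :=
  monotoneOn_of_deriv_nonneg (convex_Icc s t) f.continuousOn f.differentiableOn fun x hx => by
    simpa only [Polynomial.deriv] using h x (interior_subset hx)

lemma antitoneOn_eval_of_derivative_nonpos (h : ∀ x ∈ Icc s t, (derivative f).eval x ≤ 0) :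
    AntitoneOn (fun x => f.eval x) (Icc s t) :=
  antitoneOn_of_deriv_nonpos (convex_Icc s t) f.continuousOn f.differentiableOn fun x hx => by
    simpa only [Polynomial.deriv] using h x (interior_subset hx)

lemma strictMonoOn_or_strictAntiOn_eval (hab : a ≤ b)
    (h : ∀ x ∈ Ioo a b, (derivative f).eval x ≠ 0) :
    StrictMonoOn (fun x => f.eval x) (Icc a b) ∨ StrictAntiOn (fun x => f.eval x) (Icc a b) := by
  have eval_ne : ∀ x ∈ Icc a b, ∀ y ∈ Icc a b, x < y → f.eval x ≠ f.eval y := by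
    intro x hx y hy hxy heq
    obtain ⟨c, hc, hc0⟩ := exists_deriv_eq_zero hxy f.continuousOn heq
    exact h c ⟨hx.1.trans_lt hc.1, hc.2.trans_le hy.2⟩ (by rwa [Polynomial.deriv] at hc0)
  refine f.continuousOn.strictMonoOn_of_injOn_Icc' hab fun x hx y hy heq => ?_
  rcases lt_trichotomy x y with hxy | hxy | hxy
  · exact absurd heq (eval_ne x hx y hy hxy)
  · exact hxy
  · exact absurd heq.symm (eval_ne y hy x hx hxy)

lemma exists_mem_Ioo_eval_pos (hab : a < b) {x : ℝ} (hx : x ∈ Icc a b) (hfx : 0 < f.eval x) :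
    ∃ y ∈ Ioo a b, 0 < f.eval y := by
  rw [← closure_Ioo hab.ne] at hx
  obtain ⟨y, hfy, hy⟩ := mem_closure_iff.1 hx {y | 0 < f.eval y}
    (isOpen_lt continuous_const f.continuous) hfx
  exact ⟨y, hy, hfy⟩

lemma exists_mem_Ioo_eval_eq_zero (hab : a < b) (h : f.eval a * f.eval b < 0) :
    ∃ y ∈ Ioo a b, f.eval y = 0 := by
  rcases mul_neg_iff.1 h with ⟨ha, hb⟩ | ⟨ha, hb⟩
  · exact intermediate_value_Ioo' hab.le f.continuousOn ⟨hb, ha⟩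
  · exact intermediate_value_Ioo hab.le f.continuousOn ⟨ha, hb⟩

lemma sign_eval_eq_of_forall_ne_zero (h : ∀ x ∈ Ioo a b, f.eval x ≠ 0) (hs : s ∈ Ioo a b)
    (ht : t ∈ Ioo a b) : sign (f.eval s) = sign (f.eval t) := by
  have hconn : (f.eval '' Ioo a b).OrdConnected :=
    (isPreconnected_Ioo.image _ f.continuousOn).ordConnected
  have no_crossing : ∀ x ∈ Ioo a b, ∀ y ∈ Ioo a b, f.eval x < 0 → ¬ 0 < f.eval y := by
    intro x hx y hy hfx hfy
    obtain ⟨z, hz, hz0⟩ := hconn.out ⟨x, hx, rfl⟩ ⟨y, hy, rfl⟩ ⟨hfx.le, hfy.le⟩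
    exact h z hz hz0
  rcases (h s hs).lt_or_gt with hfs | hfs <;> rcases (h t ht).lt_or_gt with hft | hft
  · rw [sign_neg hfs, sign_neg hft]
  · exact absurd hft (no_crossing s hs t ht hfs)
  · exact absurd hfs (no_crossing t ht s hs hft)
  · rw [sign_pos hfs, sign_pos hft]

lemma exists_mem_Ioo_eval_pos_of_sign_eq (hab : a ≤ b) (hab' : a' < b')
    (hf : ∀ x ∈ Ioo a b, (derivative f).eval x ≠ 0)
    (ha : sign (f.eval a) = sign (g.eval a'))
    (hb : sign (f.eval b) = sign (g.eval b'))
    (ht : t ∈ Ioo a b) (hft : 0 < f.eval t) : ∃ t' ∈ Ioo a' b', 0 < g.eval t' := by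
  have ht' := Ioo_subset_Icc_self ht
  rcases strictMonoOn_or_strictAntiOn_eval hab hf with hmono | hanti
  · have hfb : 0 < f.eval b := hft.trans (hmono ht' (right_mem_Icc.2 hab) ht.2)
    refine exists_mem_Ioo_eval_pos hab' (right_mem_Icc.2 hab'.le) ?_
    rwa [← sign_eq_one_iff, ← hb, sign_eq_one_iff]
  · have hfa : 0 < f.eval a := hft.trans (hanti (left_mem_Icc.2 hab) ht' ht.1)
    refine exists_mem_Ioo_eval_pos hab' (left_mem_Icc.2 hab'.le) ?_
    rwa [← sign_eq_one_iff, ← ha, sign_eq_one_iff]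

lemma exists_sign_eval_eq_of_sign_eval_endpoints_eq (hab' : a' < b')
    (hf : ∀ x ∈ Ioo a b, (derivative f).eval x ≠ 0)
    (ha : sign (f.eval a) = sign (g.eval a'))
    (hb : sign (f.eval b) = sign (g.eval b')) (ht : t ∈ Ioo a b) :
    ∃ t' ∈ Ioo a' b', sign (f.eval t) = sign (g.eval t') := by
  have hab : a ≤ b := (ht.1.trans ht.2).le
  rcases lt_trichotomy (f.eval t) 0 with hft | hft | hft
  · obtain ⟨t', ht', hgt'⟩ := exists_mem_Ioo_eval_pos_of_sign_eq (f := -f) (g := -g) hab hab'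
      (by simpa using hf) (by simp [Left.sign_neg, ha]) (by simp [Left.sign_neg, hb]) ht
      (by simpa using hft)
    exact ⟨t', ht', by rw [sign_neg hft, sign_neg (by simpa using hgt')]⟩
  · have hends : f.eval a * f.eval b < 0 := by
      have ht' := Ioo_subset_Icc_self ht
      rcases strictMonoOn_or_strictAntiOn_eval hab hf with hmono | hanti
      · exact mul_neg_of_neg_of_pos (hft ▸ hmono (left_mem_Icc.2 hab) ht' ht.1)
          (hft ▸ hmono ht' (right_mem_Icc.2 hab) ht.2)
      · exact mul_neg_of_pos_of_neg (hft ▸ hanti (left_mem_Icc.2 hab) ht' ht.1)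
          (hft ▸ hanti ht' (right_mem_Icc.2 hab) ht.2)
    rw [← sign_eq_neg_one_iff, sign_mul, ha, hb, ← sign_mul, sign_eq_neg_one_iff] at hends
    obtain ⟨t', ht', hgt'⟩ := exists_mem_Ioo_eval_eq_zero hab' hends
    exact ⟨t', ht', by rw [hft, hgt']⟩
  · obtain ⟨t', ht', hgt'⟩ := exists_mem_Ioo_eval_pos_of_sign_eq hab hab' hf ha hb ht hft
    exact ⟨t', ht', by rw [sign_pos hft, sign_pos hgt']⟩

/-- Thom's lemma. -/
theorem sign_eval_eq_of_forall_sign_iterate_derivative_eq (hst : s ≤ t)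
    (h : ∀ k, sign ((derivative^[k] f).eval s) =
      sign ((derivative^[k] f).eval t)) {x : ℝ} (hx : x ∈ Icc s t) :
    sign (f.eval x) = sign (f.eval s) := by
  induction hn : f.natDegree using Nat.strong_induction_on generalizing f x with
  | _ n ih =>
    have hs := left_mem_Icc.2 hst
    have ht := right_mem_Icc.2 hst
    by_cases hf : f.natDegree = 0
    · rw [eq_C_of_natDegree_eq_zero hf, eval_C, eval_C]
    have hder : ∀ y ∈ Icc s t, sign ((derivative f).eval y) =
        sign ((derivative f).eval s) := fun y hy =>
      ih _ (hn ▸ natDegree_derivative_lt hf) (fun k => h (k + 1)) hy rfl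
    rcases le_total 0 ((derivative f).eval s) with h0 | h0
    · have hmono := monotoneOn_eval_of_derivative_nonneg (f := f) fun y hy => by
        rwa [← sign_nonneg_iff, hder y hy, sign_nonneg_iff]
      exact le_antisymm ((sign.monotone (hmono hx ht hx.2)).trans_eq (h 0).symm)
        (sign.monotone (hmono hs hx hx.1))
    · have hanti := antitoneOn_eval_of_derivative_nonpos (f := f) fun y hy => by
        rwa [← sign_nonpos_iff, hder y hy, sign_nonpos_iff]
      exact le_antisymm (sign.monotone (hanti hs hx hx.1))
        ((h 0).trans_le (sign.monotone (hanti hx ht hx.2)))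

lemma sign_eq_of_le_of_le {K : Type*} [Zero K] [LinearOrder K] {x y x' y' : K} (hxy : x ≤ y)
    (hyx : y' ≤ x') (hx : sign x = sign x') (hy : sign y = sign y') : sign x = sign y :=
  le_antisymm (sign.monotone hxy) (by rw [hx, hy]; exact sign.monotone hyx)

theorem sign_eval_eq_of_order_reversed (hst : s ≤ t) (hts' : t' ≤ s')
    (hs : ∀ k, sign ((derivative^[k] f).eval s) =
      sign ((derivative^[k] g).eval s'))
    (ht : ∀ k, sign ((derivative^[k] f).eval t) =
      sign ((derivative^[k] g).eval t')) :
    sign (f.eval s) = sign (f.eval t) := by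
  induction hn : f.natDegree using Nat.strong_induction_on generalizing f g with
  | _ n ih =>
    by_cases hf : f.natDegree = 0
    · rw [eq_C_of_natDegree_eq_zero hf, eval_C, eval_C]
    have hfder : ∀ k, sign ((derivative^[k] (derivative f)).eval s) =
        sign ((derivative^[k] (derivative f)).eval t) := fun k => by
      refine ih _ ?_ (g := derivative^[k] (derivative g)) (fun j => ?_) (fun j => ?_) rfl
      · have := natDegree_iterate_derivative (derivative f) k
        have := natDegree_derivative_lt hf
        omega
      · rw [← Function.iterate_add_apply, ← Function.iterate_add_apply]
        exact hs (j + k + 1)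
      · rw [← Function.iterate_add_apply, ← Function.iterate_add_apply]
        exact ht (j + k + 1)
    have hgder : ∀ k, sign ((derivative^[k] (derivative g)).eval t') =
        sign ((derivative^[k] (derivative g)).eval s') := fun k =>
      (ht (k + 1)).symm.trans ((hfder k).symm.trans (hs (k + 1)))
    have hf_const := fun x hx =>
      sign_eval_eq_of_forall_sign_iterate_derivative_eq hst hfder (x := x) hx
    have hg_const := fun x hx =>
      (sign_eval_eq_of_forall_sign_iterate_derivative_eq hts' hgder (x := x) hx).trans
        ((hgder 0).trans (hs 1).symm)
    -- `f` and `g` are monotone in the same sense, on intervals with oppositely ordered endpoints.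
    rcases le_total 0 ((derivative f).eval s) with h0 | h0
    · have hfmono := monotoneOn_eval_of_derivative_nonneg (f := f) fun y hy => by
        rwa [← sign_nonneg_iff, hf_const y hy, sign_nonneg_iff]
      have hgmono := monotoneOn_eval_of_derivative_nonneg (f := g) fun y hy => by
        rwa [← sign_nonneg_iff, hg_const y hy, sign_nonneg_iff]
      exact sign_eq_of_le_of_le
        (hfmono (left_mem_Icc.2 hst) (right_mem_Icc.2 hst) hst)
        (hgmono (left_mem_Icc.2 hts') (right_mem_Icc.2 hts') hts') (hs 0) (ht 0)
    · have hfanti := antitoneOn_eval_of_derivative_nonpos (f := f) fun y hy => by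
        rwa [← sign_nonpos_iff, hf_const y hy, sign_nonpos_iff]
      have hganti := antitoneOn_eval_of_derivative_nonpos (f := g) fun y hy => by
        rwa [← sign_nonpos_iff, hg_const y hy, sign_nonpos_iff]
      exact (sign_eq_of_le_of_le
        (hfanti (left_mem_Icc.2 hst) (right_mem_Icc.2 hst) hst)
        (hganti (left_mem_Icc.2 hts') (right_mem_Icc.2 hts') hts') (ht 0) (hs 0)).symm

theorem lt_of_forall_sign_iterate_derivative_eq (hf : f ≠ 0) (hst : s < t)
    (hs : ∀ k, sign ((derivative^[k] f).eval s) =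
      sign ((derivative^[k] g).eval s'))
    (ht : ∀ k, sign ((derivative^[k] f).eval t) =
      sign ((derivative^[k] g).eval t'))
    (hroot : f.IsRoot s ∨ f.IsRoot t) : s' < t' := by
  by_contra! hts'
  have hfk : ∀ k, sign ((derivative^[k] f).eval s) =
      sign ((derivative^[k] f).eval t) := fun k =>
    sign_eval_eq_of_order_reversed hst.le hts' (g := derivative^[k] g)
      (fun j => by simpa only [← Function.iterate_add_apply] using hs (j + k))
      (fun j => by simpa only [← Function.iterate_add_apply] using ht (j + k))
  have hs0 : sign (f.eval s) = 0 := by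
    rcases hroot with h | h
    · rw [h.eq_zero, sign_zero]
    · rw [show sign (f.eval s) = sign (f.eval t) from hfk 0, h.eq_zero, sign_zero]
  refine hf (eq_zero_of_infinite_isRoot f ((Icc_infinite hst).mono fun x hx => ?_))
  exact sign_eq_zero_iff.1 <|
    (sign_eval_eq_of_forall_sign_iterate_derivative_eq hst.le hfk hx).trans hs0

end RealPolynomials

lemma exists_superset_closed_of_rank_lt {α : Type*} (rank : α → ℕ) (g : α → α → Finset α)
    (hg : ∀ p q, ∀ r ∈ g p q, rank r < rank p ∧ rank r < rank q) (S : Finset α) :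
    ∃ T, S ⊆ T ∧ ∀ p ∈ T, ∀ q ∈ T, g p q ⊆ T := by
  classical
  suffices h : ∀ (n : ℕ) (S : Finset α),
      (∀ p ∈ S, ∀ q ∈ S, n ≤ rank p → n ≤ rank q → g p q ⊆ S) →
      ∃ T, S ⊆ T ∧ ∀ p ∈ T, ∀ q ∈ T, g p q ⊆ T by
    refine h (S.sup rank + 1) S fun p hp _ _ hn => ?_
    have := Finset.le_sup (f := rank) hp
    omega
  intro n
  induction n with
  | zero => exact fun S hS => ⟨S, subset_rfl, by simpa using hS⟩
  | succ n ih =>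
    intro S hS
    let S' := S ∪ (S ×ˢ S).biUnion fun x => g x.1 x.2
    have mem_S : ∀ r ∈ S', n ≤ rank r → r ∈ S := by
      intro r hr hrn
      simp only [S', Finset.mem_union, Finset.mem_biUnion, Finset.mem_product, Prod.exists] at hr
      obtain hr | ⟨p, q, ⟨hp, hq⟩, hr⟩ := hr
      · exact hr
      · obtain ⟨hrp, hrq⟩ := hg p q r hr
        exact hS p hp q hq (by omega) (by omega) hr
    obtain ⟨T, hT, hclosed⟩ := ih S' fun p hp q hq hpn hqn =>
      (Finset.subset_biUnion_of_mem (fun x : α × α => g x.1 x.2)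
        (Finset.mk_mem_product (mem_S p hp hpn) (mem_S q hq hqn))).trans Finset.subset_union_right
    exact ⟨T, Finset.subset_union_left.trans hT, hclosed⟩

section LeadingCoeff

variable {R : Type*} [Semiring R]

lemma map_eraseLead_of_leadingCoeff_eq_zero {A : Type*} [Semiring A] {φ : R →+* A} {q : R[X]}
    (h : φ q.leadingCoeff = 0) :
    q.eraseLead.map φ = q.map φ := by
  conv_rhs => rw [← q.eraseLead_add_monomial_natDegree_leadingCoeff]
  rw [Polynomial.map_add, map_monomial, h, monomial_zero_right, add_zero]

lemma map_eq_zero_of_natDegree_eq_zero {A : Type*} [Semiring A] {φ : R →+* A} {q : R[X]}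
    (h0 : q.natDegree = 0) (h : φ q.leadingCoeff = 0) : q.map φ = 0 := by
  rw [eq_C_of_natDegree_eq_zero h0, map_C, ← h0, coeff_natDegree, h, C_0]

end LeadingCoeff

section SignClosed

variable {R : Type*} [CommRing R]

lemma exists_pseudoRemainder {q : R[X]} (hq : q.natDegree ≠ 0) (p : R[X]) :
    ∃ r : R[X], r.natDegree < q.natDegree ∧
      ∃ (N : ℕ) (s : R[X]), C (q.leadingCoeff ^ N) * p = q * s + r := by
  induction hn : p.natDegree using Nat.strong_induction_on generalizing p with
  | _ n ih =>
    rcases lt_or_ge p.natDegree q.natDegree with hpq | hqp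
    · exact ⟨p, hpq, 0, 0, by simp⟩
    · obtain ⟨r, hr, N, s, h⟩ := ih _ (hn ▸ natDegree_cancelLeads_lt_of_natDegree_le_natDegree hqp
        (by omega)) (q.cancelLeads p) rfl
      refine ⟨r, hr, N + 1,
        s + C (q.leadingCoeff ^ N * p.leadingCoeff) * X ^ (p.natDegree - q.natDegree), ?_⟩
      have hcancel : q.cancelLeads p = C q.leadingCoeff * p -
          C p.leadingCoeff * X ^ (p.natDegree - q.natDegree) * q := by
        simp [cancelLeads, Nat.sub_eq_zero_of_le hqp]
      rw [hcancel] at h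
      simp only [C_mul, pow_succ]
      linear_combination h

/-- Closure of a finite set of polynomials under the operations of the Cohen–Hörmander method:
derivatives, deletion of the leading term, and pseudo-remainders. A pseudo-remainder is only
required to exist in `T`, so that no choice of a division algorithm is built in. -/
structure IsSignClosed (T : Finset R[X]) : Prop where
  derivative_mem : ∀ q ∈ T, q.natDegree ≠ 0 → derivative q ∈ T
  eraseLead_mem : ∀ q ∈ T, q.natDegree ≠ 0 → q.eraseLead ∈ T
  exists_pseudoRemainder_mem : ∀ p ∈ T, ∀ q ∈ T, q.natDegree ≠ 0 → q.natDegree ≤ p.natDegree →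
    ∃ r ∈ T, r.natDegree < q.natDegree ∧
      ∃ (N : ℕ) (s : R[X]), C (q.leadingCoeff ^ N) * p = q * s + r

theorem exists_isSignClosed_superset (S : Finset R[X]) : ∃ T, S ⊆ T ∧ IsSignClosed T := by
  classical
  choose! rem rem_lt rem_spec using fun (q p : R[X]) (hq : q.natDegree ≠ 0) =>
    exists_pseudoRemainder hq p
  let g (p q : R[X]) : Finset R[X] :=
    if q.natDegree ≠ 0 ∧ q.natDegree ≤ p.natDegree then {derivative q, q.eraseLead, rem q p} else ∅
  have natDegree_lt : ∀ p q, ∀ r ∈ g p q,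
      r.natDegree < p.natDegree ∧ r.natDegree < q.natDegree := by
    intro p q r hr
    simp only [g] at hr
    split_ifs at hr with h
    · suffices r.natDegree < q.natDegree from ⟨this.trans_le h.2, this⟩
      simp only [Finset.mem_insert, Finset.mem_singleton] at hr
      rcases hr with rfl | rfl | rfl
      · exact natDegree_derivative_lt h.1
      · have := q.eraseLead_natDegree_le
        have := h.1
        omega
      · exact rem_lt q p h.1
    · simp at hr
  obtain ⟨T, hST, hT⟩ := exists_superset_closed_of_rank_lt natDegree g natDegree_lt S
  have subset_T : ∀ p ∈ T, ∀ q ∈ T, q.natDegree ≠ 0 → q.natDegree ≤ p.natDegree →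
      {derivative q, q.eraseLead, rem q p} ⊆ T := fun p hp q hq h0 hqp => by
    simpa only [g, if_pos (And.intro h0 hqp)] using hT p hp q hq
  refine ⟨T, hST, fun q hq h0 => ?_, fun q hq h0 => ?_, fun p hp q hq h0 hqp => ?_⟩
  · exact subset_T q hq q hq h0 le_rfl (by simp)
  · exact subset_T q hq q hq h0 le_rfl (by simp)
  · exact ⟨rem q p, subset_T p hp q hq h0 hqp (by simp), rem_lt q p h0, rem_spec q p h0⟩

lemma IsSignClosed.erase [DecidableEq R[X]] {T : Finset R[X]} (hT : IsSignClosed T) {p : R[X]}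
    (hp : ∀ q ∈ T, q.natDegree ≤ p.natDegree) : IsSignClosed (T.erase p) := by
  have mem_erase_of_lt : ∀ r ∈ T, ∀ q ∈ T, r.natDegree < q.natDegree → r ∈ T.erase p := by
    rintro r hr q hq hrq
    exact Finset.mem_erase.2 ⟨by rintro rfl; exact (hp q hq).not_gt hrq, hr⟩
  refine ⟨fun q hq h0 => ?_, fun q hq h0 => ?_, fun f hf q hq h0 hqf => ?_⟩
  · have hq := Finset.mem_of_mem_erase hq
    exact mem_erase_of_lt _ (hT.derivative_mem q hq h0) q hq (natDegree_derivative_lt h0)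
  · have hq := Finset.mem_of_mem_erase hq
    have := q.eraseLead_natDegree_le
    exact mem_erase_of_lt _ (hT.eraseLead_mem q hq h0) q hq (by omega)
  · have hq := Finset.mem_of_mem_erase hq
    obtain ⟨r, hr, hrq, h⟩ :=
      hT.exists_pseudoRemainder_mem f (Finset.mem_of_mem_erase hf) q hq h0 hqf
    exact ⟨r, mem_erase_of_lt r hr q hq hrq, hrq, h⟩

variable {φ ψ : R →+* ℝ} {T : Finset R[X]}

lemma IsSignClosed.exists_leadingCoeff_ne_zero (hT : IsSignClosed T)
    (hlc : ∀ q ∈ T, sign (φ q.leadingCoeff) = sign (ψ q.leadingCoeff)) {q : R[X]} (hq : q ∈ T)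
    (hqφ : q.map φ ≠ 0) :
    ∃ r ∈ T, r.natDegree ≤ q.natDegree ∧ r.map φ = q.map φ ∧ r.map ψ = q.map ψ ∧
      φ r.leadingCoeff ≠ 0 := by
  induction hn : q.natDegree using Nat.strong_induction_on generalizing q with
  | _ n ih =>
    by_cases h : φ q.leadingCoeff = 0
    · have h' : ψ q.leadingCoeff = 0 := by rw [← sign_eq_zero_iff, ← hlc q hq, h, sign_zero]
      have h0 : q.natDegree ≠ 0 := fun h0 => hqφ (map_eq_zero_of_natDegree_eq_zero h0 h)
      have hlt : q.eraseLead.natDegree < n := by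
        have := q.eraseLead_natDegree_le
        omega
      obtain ⟨r, hr, hrq, hrφ, hrψ, hr0⟩ := ih _ hlt (hT.eraseLead_mem q hq h0)
        (by rwa [map_eraseLead_of_leadingCoeff_eq_zero h]) rfl
      exact ⟨r, hr, hrq.trans hlt.le, hrφ.trans (map_eraseLead_of_leadingCoeff_eq_zero h),
        hrψ.trans (map_eraseLead_of_leadingCoeff_eq_zero h'), hr0⟩
    · exact ⟨q, hq, hn.le, rfl, rfl, h⟩

lemma IsSignClosed.map_ne_zero (hT : IsSignClosed T)
    (hlc : ∀ q ∈ T, sign (φ q.leadingCoeff) = sign (ψ q.leadingCoeff)) {q : R[X]} (hq : q ∈ T)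
    (hqφ : q.map φ ≠ 0) : q.map ψ ≠ 0 := by
  obtain ⟨r, hr, -, -, hrψ, hr0⟩ := hT.exists_leadingCoeff_ne_zero hlc hq hqφ
  have hψ : ψ r.leadingCoeff ≠ 0 := by rwa [← sign_ne_zero, ← hlc r hr, sign_ne_zero]
  intro h
  rw [← hrψ] at h
  exact hψ (by simpa using congr_arg (coeff · r.natDegree) h)

end SignClosed

section SignMatching

variable {R : Type*} [CommRing R] {φ ψ : R →+* ℝ} {S T : Finset R[X]} {p q : R[X]}
  {a b a' b' s t s' t' : ℝ}

/-- The specializations along `φ` at `t` and along `ψ` at `t'` realize the same sign condition on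
the polynomials in `T`. -/
def SameSigns (φ ψ : R →+* ℝ) (T : Finset R[X]) (t t' : ℝ) : Prop :=
  ∀ q ∈ T, sign ((q.map φ).eval t) = sign ((q.map ψ).eval t')

lemma SameSigns.symm (h : SameSigns φ ψ T t t') : SameSigns ψ φ T t' t :=
  fun q hq => (h q hq).symm

lemma SameSigns.mono (h : SameSigns φ ψ T t t') (hST : S ⊆ T) : SameSigns φ ψ S t t' :=
  fun q hq => h q (hST hq)

lemma SameSigns.isRoot_iff (h : SameSigns φ ψ T t t') (hq : q ∈ T) :
    (q.map φ).IsRoot t ↔ (q.map ψ).IsRoot t' := by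
  rw [IsRoot.def, ← sign_eq_zero_iff, h q hq, sign_eq_zero_iff, IsRoot.def]

lemma SameSigns.sign_iterate_derivative_eq (h : SameSigns φ ψ T t t') (hT : IsSignClosed T)
    (hq : q ∈ T) (k : ℕ) :
    sign ((derivative^[k] (q.map φ)).eval t) = sign ((derivative^[k] (q.map ψ)).eval t') := by
  induction k generalizing q with
  | zero => exact h q hq
  | succ k ih =>
    rw [Function.iterate_succ_apply, Function.iterate_succ_apply, derivative_map, derivative_map]
    by_cases h0 : q.natDegree = 0
    · simp [derivative_of_natDegree_zero h0]
    · exact ih (hT.derivative_mem q hq h0)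

lemma SameSigns.lt_of_isRoot (hs : SameSigns φ ψ T s s') (ht : SameSigns φ ψ T t t')
    (hT : IsSignClosed T) (hq : q ∈ T) (hqφ : q.map φ ≠ 0) (hst : s < t)
    (hroot : (q.map φ).IsRoot s ∨ (q.map φ).IsRoot t) : s' < t' :=
  lt_of_forall_sign_iterate_derivative_eq hqφ hst (hs.sign_iterate_derivative_eq hT hq)
    (ht.sign_iterate_derivative_eq hT hq) hroot

lemma SameSigns.sign_eval_eq_of_isRoot [DecidableEq R[X]] (hT : IsSignClosed T) (hp : p ∈ T)
    (hdeg : ∀ q ∈ T, q.natDegree ≤ p.natDegree)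
    (hlc : ∀ q ∈ T, sign (φ q.leadingCoeff) = sign (ψ q.leadingCoeff))
    (ht : SameSigns φ ψ (T.erase p) t t') (hq : q ∈ T.erase p) (hqφ : q.map φ ≠ 0)
    (hroot : (q.map φ).IsRoot t) :
    sign ((p.map φ).eval t) = sign ((p.map ψ).eval t') := by
  obtain ⟨d, hd, -, hdφ, -, hd0⟩ := (hT.erase hdeg).exists_leadingCoeff_ne_zero
    (fun q hq => hlc q (Finset.mem_of_mem_erase hq)) hq hqφ
  rw [← hdφ] at hroot
  have hdT := Finset.mem_of_mem_erase hd
  have hdeg0 : d.natDegree ≠ 0 := by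
    intro h0
    rw [eq_C_of_natDegree_eq_zero h0, map_C, IsRoot.def, eval_C, ← h0, coeff_natDegree] at hroot
    exact hd0 hroot
  -- At a root of `d`, the sign of `p` is read off from its pseudo-remainder modulo `d`.
  obtain ⟨r, hr, hrd, N, s, hrs⟩ :=
    hT.exists_pseudoRemainder_mem p hp d hdT hdeg0 (hdeg d hdT)
  have hr' : r ∈ T.erase p :=
    Finset.mem_erase.2 ⟨fun h => (hdeg d hdT).not_gt (h ▸ hrd), hr⟩
  have eval_rem : ∀ (χ : R →+* ℝ) (x : ℝ), (d.map χ).IsRoot x →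
      χ d.leadingCoeff ^ N * (p.map χ).eval x = (r.map χ).eval x := by
    intro χ x hx
    have := congr_arg (fun f => (f.map χ).eval x) hrs
    simpa [hx.eq_zero] using this
  have hsign := ht r hr'
  rw [← eval_rem φ t hroot, ← eval_rem ψ t' ((ht.isRoot_iff hd).1 hroot), sign_mul, sign_mul,
    sign_pow, sign_pow, ← hlc d hdT] at hsign
  exact mul_left_cancel₀ (pow_ne_zero N (sign_ne_zero.2 hd0)) hsign

/-- The places where a polynomial of `T` that does not specialize to zero along `φ` vanishes. -/
def nontrivialRoots (φ : R →+* ℝ) (T : Finset R[X]) : Set ℝ :=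
  {x | ∃ q ∈ T, q.map φ ≠ 0 ∧ (q.map φ).IsRoot x}

lemma finite_nontrivialRoots (φ : R →+* ℝ) (T : Finset R[X]) : (nontrivialRoots φ T).Finite := by
  refine (T.finite_toSet.biUnion fun q _ => (q.map φ).rootSet_finite ℝ).subset ?_
  rintro x ⟨q, hq, hqφ, hx⟩
  exact mem_biUnion hq ((mem_rootSet_of_ne hqφ).2 (by simpa using hx))

lemma SameSigns.mem_nontrivialRoots (h : SameSigns φ ψ T t t') (hT : IsSignClosed T)
    (hlc : ∀ q ∈ T, sign (φ q.leadingCoeff) = sign (ψ q.leadingCoeff))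
    (ht : t ∈ nontrivialRoots φ T) : t' ∈ nontrivialRoots ψ T := by
  obtain ⟨q, hq, hqφ, hroot⟩ := ht
  exact ⟨q, hq, hT.map_ne_zero hlc hq hqφ, (h.isRoot_iff hq).1 hroot⟩

/-- Matching parameters in `(a, b)` and `(a', b')` lie on the same side of `x` and `x'`,
respectively. -/
def CutsAlike (φ ψ : R →+* ℝ) (T : Finset R[X]) (a b a' b' x x' : ℝ) : Prop :=
  ∀ s ∈ Ioo a b, ∀ s' ∈ Ioo a' b', SameSigns φ ψ T s s' → (x < s ↔ x' < s') ∧ (s < x ↔ s' < x')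

lemma cutsAlike_left : CutsAlike φ ψ T a b a' b' a a' := fun _ hs _ hs' _ =>
  ⟨iff_of_true hs.1 hs'.1, iff_of_false hs.1.not_gt hs'.1.not_gt⟩

lemma cutsAlike_right : CutsAlike φ ψ T a b a' b' b b' := fun _ hs _ hs' _ =>
  ⟨iff_of_false hs.2.not_gt hs'.2.not_gt, iff_of_true hs.2 hs'.2⟩

lemma SameSigns.cutsAlike (h : SameSigns φ ψ T t t') (hT : IsSignClosed T)
    (hlc : ∀ q ∈ T, sign (φ q.leadingCoeff) = sign (ψ q.leadingCoeff))
    (ht : t ∈ nontrivialRoots φ T) : CutsAlike φ ψ T a b a' b' t t' := by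
  intro s _ s' _ hs
  obtain ⟨q', hq', hqψ, hroot'⟩ := h.mem_nontrivialRoots hT hlc ht
  obtain ⟨q, hq, hqφ, hroot⟩ := ht
  exact ⟨⟨fun hts => h.lt_of_isRoot hs hT hq hqφ hts (.inl hroot),
      fun hts => h.symm.lt_of_isRoot hs.symm hT hq' hqψ hts (.inl hroot')⟩,
    fun hst => hs.lt_of_isRoot h hT hq hqφ hst (.inr hroot),
    fun hst => hs.symm.lt_of_isRoot h.symm hT hq' hqψ hst (.inr hroot')⟩

lemma exists_Ioo_disjoint_of_finite {α : Type*} [LinearOrder α] {W : Set α} (hW : W.Finite)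
    {a b t : α} (htW : t ∉ W) (ht : t ∈ Ioo a b) :
    ∃ x ∈ {a, b} ∪ (W ∩ Ioo a b), ∃ y ∈ {a, b} ∪ (W ∩ Ioo a b),
      t ∈ Ioo x y ∧ Disjoint W (Ioo x y) := by
  obtain ⟨x, ⟨hx, hxt⟩, hxmax⟩ := exists_max_image (({a, b} ∪ (W ∩ Ioo a b)) ∩ Iio t) id
    (((toFinite _).union (hW.inter_of_left _)).inter_of_left _) ⟨a, .inl (.inl rfl), ht.1⟩
  obtain ⟨y, ⟨hy, hty⟩, hymin⟩ := exists_min_image (({a, b} ∪ (W ∩ Ioo a b)) ∩ Ioi t) id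
    (((toFinite _).union (hW.inter_of_left _)).inter_of_left _) ⟨b, .inl (.inr rfl), ht.2⟩
  have hsub : Ioo x y ⊆ Ioo a b :=
    Ioo_subset_Ioo (hxmax a ⟨.inl (.inl rfl), ht.1⟩) (hymin b ⟨.inl (.inr rfl), ht.2⟩)
  refine ⟨x, hx, y, hy, ⟨hxt, hty⟩, disjoint_left.2 fun w hw hwxy => ?_⟩
  rcases lt_trichotomy w t with h | rfl | h
  · exact (hxmax w ⟨.inr ⟨hw, hsub hwxy⟩, h⟩).not_gt hwxy.1
  · exact htW hw
  · exact (hymin w ⟨.inr ⟨hw, hsub hwxy⟩, h⟩).not_gt hwxy.2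

lemma IsSignClosed.map_derivative_eq_zero (hT : IsSignClosed T) (hp : p ∈ T)
    (hlc : ∀ q ∈ T, sign (φ q.leadingCoeff) = sign (ψ q.leadingCoeff))
    (hpφ : (derivative p).map φ = 0) : (derivative p).map ψ = 0 := by
  by_cases h0 : p.natDegree = 0
  · rw [derivative_of_natDegree_zero h0, Polynomial.map_zero]
  · by_contra hpψ
    exact hT.map_ne_zero (fun q hq => (hlc q hq).symm) (hT.derivative_mem p hp h0) hpψ hpφ

lemma exists_partner [DecidableEq R[X]] (hT : IsSignClosed T) (hp : p ∈ T)
    (hdeg : ∀ q ∈ T, q.natDegree ≤ p.natDegree)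
    (hlc : ∀ q ∈ T, sign (φ q.leadingCoeff) = sign (ψ q.leadingCoeff))
    (hab' : a' ≤ b') (ha : SameSigns φ ψ T a a') (hb : SameSigns φ ψ T b b')
    (hmatch : ∀ t ∈ Ioo a b, ∃ t' ∈ Ioo a' b', SameSigns φ ψ (T.erase p) t t') {x : ℝ}
    (hx : x ∈ {a, b} ∪ (nontrivialRoots φ (T.erase p) ∩ Ioo a b)) :
    ∃ x' ∈ Icc a' b', sign ((p.map φ).eval x) = sign ((p.map ψ).eval x') ∧
      CutsAlike φ ψ (T.erase p) a b a' b' x x' := by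
  rcases hx with (rfl | rfl) | ⟨hx, hxab⟩
  · exact ⟨a', left_mem_Icc.2 hab', ha p hp, cutsAlike_left⟩
  · exact ⟨b', right_mem_Icc.2 hab', hb p hp, cutsAlike_right⟩
  · obtain ⟨x', hx', hxx'⟩ := hmatch x hxab
    have hcut := hxx'.cutsAlike (a := a) (b := b) (a' := a') (b' := b') (hT.erase hdeg)
      (fun q hq => hlc q (Finset.mem_of_mem_erase hq)) hx
    obtain ⟨q, hq, hqφ, hroot⟩ := hx
    exact ⟨x', Ioo_subset_Icc_self hx',
      hxx'.sign_eval_eq_of_isRoot hT hp hdeg hlc hq hqφ hroot, hcut⟩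

lemma disjoint_nontrivialRoots_Ioo_of_cutsAlike {x y x' y' : ℝ} (hT : IsSignClosed T)
    (hlc : ∀ q ∈ T, sign (φ q.leadingCoeff) = sign (ψ q.leadingCoeff))
    (hmatch : ∀ t' ∈ Ioo a' b', ∃ t ∈ Ioo a b, SameSigns ψ φ T t' t)
    (hx' : x' ∈ Icc a' b') (hx : CutsAlike φ ψ T a b a' b' x x')
    (hy' : y' ∈ Icc a' b') (hy : CutsAlike φ ψ T a b a' b' y y')
    (hxy : Disjoint (nontrivialRoots φ T) (Ioo x y)) :
    Disjoint (nontrivialRoots ψ T) (Ioo x' y') := by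
  refine disjoint_left.2 fun w hw hwxy => ?_
  have hwab : w ∈ Ioo a' b' := ⟨hx'.1.trans_lt hwxy.1, hwxy.2.trans_le hy'.2⟩
  obtain ⟨u, hu, huw⟩ := hmatch w hwab
  exact disjoint_left.1 hxy (huw.mem_nontrivialRoots hT (fun q hq => (hlc q hq).symm) hw)
    ⟨(hx u hu w hwab huw.symm).1.2 hwxy.1, (hy u hu w hwab huw.symm).2.2 hwxy.2⟩

lemma SameSigns.of_disjoint_nontrivialRoots {x y r : ℝ} (h : SameSigns φ ψ T r s)
    (hT : Disjoint (nontrivialRoots ψ T) (Ioo x y)) (hs : s ∈ Ioo x y) (ht : t ∈ Ioo x y) :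
    SameSigns φ ψ T r t := by
  intro q hq
  rw [h q hq]
  by_cases hqψ : q.map ψ = 0
  · rw [hqψ, eval_zero, eval_zero]
  · exact sign_eval_eq_of_forall_ne_zero
      (fun z hz hz0 => disjoint_left.1 hT ⟨q, hq, hqψ, hz0⟩ hz) hs ht

lemma eval_eq_eval_of_derivative_eq_zero {A : Type*} [Semiring A] [IsAddTorsionFree A] {f : A[X]}
    (h : derivative f = 0) (x y : A) :
    f.eval x = f.eval y := by
  rw [eq_C_of_natDegree_eq_zero (Polynomial.derivative_eq_zero.1 h), eval_C, eval_C]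

lemma SameSigns.of_erase [DecidableEq R[X]] (h : SameSigns φ ψ (T.erase p) t t')
    (hp : sign ((p.map φ).eval t) = sign ((p.map ψ).eval t')) : SameSigns φ ψ T t t' := by
  intro q hq
  rcases eq_or_ne q p with rfl | hqp
  · exact hp
  · exact h q (Finset.mem_erase.2 ⟨hqp, hq⟩)

lemma IsSignClosed.eval_derivative_map_ne_zero [DecidableEq R[X]] (hT : IsSignClosed T)
    (hp : p ∈ T) (hpφ : (derivative p).map φ ≠ 0) (ht : t ∉ nontrivialRoots φ (T.erase p)) :
    (derivative (p.map φ)).eval t ≠ 0 := by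
  have h0 : p.natDegree ≠ 0 := fun h0 => hpφ <| by
    rw [derivative_of_natDegree_zero h0, Polynomial.map_zero]
  have hmem : derivative p ∈ T.erase p := Finset.mem_erase.2
    ⟨fun h => (natDegree_derivative_lt h0).ne (congr_arg natDegree h), hT.derivative_mem p hp h0⟩
  rw [derivative_map]
  exact fun hroot => ht ⟨derivative p, hmem, hpφ, hroot⟩

theorem exists_sameSigns_of_erase [DecidableEq R[X]] (hT : IsSignClosed T) (hp : p ∈ T)
    (hdeg : ∀ q ∈ T, q.natDegree ≤ p.natDegree)
    (hlc : ∀ q ∈ T, sign (φ q.leadingCoeff) = sign (ψ q.leadingCoeff))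
    (ha : SameSigns φ ψ T a a') (hb : SameSigns φ ψ T b b')
    (hmatch : ∀ t ∈ Ioo a b, ∃ t' ∈ Ioo a' b', SameSigns φ ψ (T.erase p) t t')
    (hmatch' : ∀ t' ∈ Ioo a' b', ∃ t ∈ Ioo a b, SameSigns ψ φ (T.erase p) t' t)
    (ht : t ∈ Ioo a b) : ∃ t' ∈ Ioo a' b', SameSigns φ ψ T t t' := by
  obtain ⟨t', ht', htt'⟩ := hmatch t ht
  by_cases hroot : t ∈ nontrivialRoots φ (T.erase p)
  · obtain ⟨q, hq, hqφ, hqt⟩ := hroot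
    exact ⟨t', ht', htt'.of_erase (htt'.sign_eval_eq_of_isRoot hT hp hdeg hlc hq hqφ hqt)⟩
  by_cases hder : (derivative p).map φ = 0
  · have hder' := hT.map_derivative_eq_zero hp hlc hder
    rw [← derivative_map] at hder hder'
    refine ⟨t', ht', htt'.of_erase ?_⟩
    rw [eval_eq_eval_of_derivative_eq_zero hder t a, ha p hp,
      eval_eq_eval_of_derivative_eq_zero hder' a' t']
  obtain ⟨x, hx, y, hy, htxy, hdisj⟩ :=
    exists_Ioo_disjoint_of_finite (finite_nontrivialRoots φ _) hroot ht
  have hab' := (ht'.1.trans ht'.2).le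
  obtain ⟨x', hx', hpx, hxcut⟩ := exists_partner hT hp hdeg hlc hab' ha hb hmatch hx
  obtain ⟨y', hy', hpy, hycut⟩ := exists_partner hT hp hdeg hlc hab' ha hb hmatch hy
  have htxy' : t' ∈ Ioo x' y' :=
    ⟨(hxcut t ht t' ht' htt').1.1 htxy.1, (hycut t ht t' ht' htt').2.1 htxy.2⟩
  have hdisj' := disjoint_nontrivialRoots_Ioo_of_cutsAlike (hT.erase hdeg)
    (fun q hq => hlc q (Finset.mem_of_mem_erase hq)) hmatch' hx' hxcut hy' hycut hdisj
  have hder_ne : ∀ z ∈ Ioo x y, (derivative (p.map φ)).eval z ≠ 0 := fun z hz =>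
    hT.eval_derivative_map_ne_zero hp hder fun hz' => disjoint_left.1 hdisj hz' hz
  -- `p` is strictly monotone on `(x, y)`, so its signs at the ends determine those inside.
  obtain ⟨u, hu, hpu⟩ := exists_sign_eval_eq_of_sign_eval_endpoints_eq
    (htxy'.1.trans htxy'.2) hder_ne hpx hpy htxy
  exact ⟨u, Ioo_subset_Ioo hx'.1 hy'.2 hu,
    (htt'.of_disjoint_nontrivialRoots hdisj' htxy' hu).of_erase hpu⟩

theorem exists_sameSigns (hT : IsSignClosed T)
    (hlc : ∀ q ∈ T, sign (φ q.leadingCoeff) = sign (ψ q.leadingCoeff)) (hab' : a' < b')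
    (ha : SameSigns φ ψ T a a') (hb : SameSigns φ ψ T b b') (ht : t ∈ Ioo a b) :
    ∃ t' ∈ Ioo a' b', SameSigns φ ψ T t t' := by
  classical
  induction T using Finset.strongInduction generalizing φ ψ a b a' b' t with
  | _ T ih =>
    rcases T.eq_empty_or_nonempty with rfl | hne
    · obtain ⟨t', ht'⟩ := exists_between hab'
      exact ⟨t', ht', by simp [SameSigns]⟩
    obtain ⟨p, hp, hdeg⟩ := T.exists_max_image natDegree hne
    have herase := Finset.erase_subset p T
    refine exists_sameSigns_of_erase hT hp hdeg hlc ha hb (fun s hs => ?_) (fun s' hs' => ?_) ht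
    · exact ih _ (Finset.erase_ssubset hp) (hT.erase hdeg) (fun q hq => hlc q (herase hq))
        hab' (ha.mono herase) (hb.mono herase) hs
    · exact ih _ (Finset.erase_ssubset hp) (hT.erase hdeg)
        (fun q hq => (hlc q (herase hq)).symm) (ht.1.trans ht.2) (ha.symm.mono herase)
        (hb.symm.mono herase) hs'

theorem exists_finset_forall_sign_eq_exists_sign_eval_eq (S : Finset R[X]) (a b : R) :
    ∃ F : Finset R, ∀ φ ψ : R →+* ℝ, (∀ r ∈ F, sign (φ r) = sign (ψ r)) →
      ∀ t ∈ Icc (φ a) (φ b), ∃ t' ∈ Icc (ψ a) (ψ b), SameSigns φ ψ S t t' := by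
  classical
  obtain ⟨T, hST, hT⟩ := exists_isSignClosed_superset S
  refine ⟨{b - a} ∪ T.image leadingCoeff ∪ T.image (eval a) ∪ T.image (eval b),
    fun φ ψ h t ht => ?_⟩
  simp only [Finset.mem_union, Finset.mem_singleton, Finset.mem_image, or_imp, forall_and,
    forall_eq, forall_exists_index, and_imp, forall_apply_eq_imp_iff₂] at h
  obtain ⟨⟨⟨hab, hlc⟩, hTa⟩, hTb⟩ := h
  have ha : SameSigns φ ψ T (φ a) (ψ a) := fun q hq => by
    simpa only [eval_map_apply] using hTa q hq
  have hb : SameSigns φ ψ T (φ b) (ψ b) := fun q hq => by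
    simpa only [eval_map_apply] using hTb q hq
  have hψab : ψ a ≤ ψ b := by
    rw [← sub_nonneg, ← map_sub, ← sign_nonneg_iff, ← hab, sign_nonneg_iff, map_sub, sub_nonneg]
    exact ht.1.trans ht.2
  rcases ht.1.eq_or_lt with rfl | hat
  · exact ⟨ψ a, left_mem_Icc.2 hψab, ha.mono hST⟩
  rcases ht.2.eq_or_lt with rfl | htb
  · exact ⟨ψ b, right_mem_Icc.2 hψab, hb.mono hST⟩
  have hψab' : ψ a < ψ b := by
    rw [← sub_pos, ← map_sub, ← sign_eq_one_iff, ← hab, sign_eq_one_iff, map_sub, sub_pos]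
    exact hat.trans htb
  obtain ⟨t', ht', htt'⟩ := exists_sameSigns hT hlc hψab' ha hb ⟨hat, htb⟩
  exact ⟨t', Ioo_subset_Icc_self ht', htt'.mono hST⟩

end SignMatching

section Traces

variable {α Θ : Type*}

open scoped Classical in
/-- The subsets of `A` cut out by the family of sets `{a | b a θ}`, `θ : Θ`. -/
noncomputable def traces (b : α → Θ → Prop) (A : Finset α) : Finset (Finset α) :=
  {T ∈ A.powerset | ∃ θ, ∀ a ∈ A, (a ∈ T ↔ b a θ)}

/-- The family of sets `{a | b a θ}`, `θ : Θ`, has polynomially bounded shatter function. -/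
def HasPolynomialTraces (b : α → Θ → Prop) : Prop :=
  ∃ N : ℕ, ∀ A : Finset α, (traces b A).card ≤ (A.card + 1) ^ N

lemma mem_traces {b : α → Θ → Prop} {A T : Finset α} :
    T ∈ traces b A ↔ T ⊆ A ∧ ∃ θ, ∀ a ∈ A, (a ∈ T ↔ b a θ) := by
  simp only [traces, Finset.mem_filter, Finset.mem_powerset]

lemma sum_choose_le_add_one_pow (n N : ℕ) :
    ∑ i ∈ Finset.range (N + 1), n.choose i ≤ (n + 1) ^ N := by
  rw [add_pow]
  refine Finset.sum_le_sum fun i hi => (Nat.choose_le_pow n i).trans ?_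
  have hpos : 0 < N.choose i := Nat.choose_pos (Finset.mem_range_succ_iff.1 hi)
  simpa using Nat.le_mul_of_pos_right (n ^ i) hpos

lemma card_le_add_one_pow_of_forall_shatters [DecidableEq α] {𝒜 : Finset (Finset α)}
    {A : Finset α} (hA : ∀ T ∈ 𝒜, T ⊆ A) {N : ℕ} (hN : ∀ S, 𝒜.Shatters S → S.card ≤ N) :
    𝒜.card ≤ (A.card + 1) ^ N := by
  have hsub : 𝒜.shatterer ⊆ (Finset.range (N + 1)).biUnion A.powersetCard := by
    intro S hS
    rw [Finset.mem_shatterer] at hS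
    obtain ⟨T, hT, hST⟩ := hS.exists_superset
    exact Finset.mem_biUnion.2 ⟨S.card, Finset.mem_range_succ_iff.2 (hN S hS),
      Finset.mem_powersetCard.2 ⟨hST.trans (hA T hT), rfl⟩⟩
  calc 𝒜.card ≤ 𝒜.shatterer.card := 𝒜.card_le_card_shatterer
    _ ≤ ∑ i ∈ Finset.range (N + 1), (A.powersetCard i).card :=
      (Finset.card_le_card hsub).trans Finset.card_biUnion_le
    _ = ∑ i ∈ Finset.range (N + 1), A.card.choose i := by simp only [Finset.card_powersetCard]
    _ ≤ (A.card + 1) ^ N := sum_choose_le_add_one_pow _ _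

lemma linearIndependent_of_forall_exists_dual_pos_iff {𝕜 V κ : Type*} [Field 𝕜] [LinearOrder 𝕜]
    [IsStrictOrderedRing 𝕜] [AddCommGroup V] [Module 𝕜 V] [Finite κ] {w : κ → V}
    (h : ∀ P : Set κ, ∃ ℓ : Module.Dual 𝕜 V, ∀ i, 0 < ℓ (w i) ↔ i ∈ P) :
    LinearIndependent 𝕜 w := by
  cases nonempty_fintype κ
  have nonpos_of_sum_eq_zero : ∀ g : κ → 𝕜, ∑ i, g i • w i = 0 → ∀ i, g i ≤ 0 := by
    intro g hg
    by_contra! hpos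
    obtain ⟨j, hj⟩ := hpos
    obtain ⟨ℓ, hℓ⟩ := h {i | 0 < g i}
    have hsum : 0 < ∑ i, g i * ℓ (w i) := by
      refine Finset.sum_pos' (fun i _ => ?_) ⟨j, Finset.mem_univ j, mul_pos hj ((hℓ j).2 hj)⟩
      rcases lt_or_ge 0 (g i) with hi | hi
      · exact (mul_pos hi ((hℓ i).2 hi)).le
      · exact mul_nonneg_of_nonpos_of_nonpos hi (not_lt.1 fun hpos => ((hℓ i).1 hpos).not_ge hi)
    have hzero : ∑ i, g i * ℓ (w i) = 0 := by
      simpa only [map_sum, map_smul, smul_eq_mul, map_zero] using congr_arg ℓ hg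
    exact hsum.ne' hzero
  refine Fintype.linearIndependent_iff.2 fun g hg i => ?_
  refine (nonpos_of_sum_eq_zero g hg i).antisymm (neg_nonpos.1 ?_)
  exact nonpos_of_sum_eq_zero (-g) (by simp [hg]) i

theorem hasPolynomialTraces_dual_pos {𝕜 V : Type*} [Field 𝕜] [LinearOrder 𝕜]
    [IsStrictOrderedRing 𝕜] [AddCommGroup V] [Module 𝕜 V] [FiniteDimensional 𝕜 V] (w : α → V)
    (ℓ : Θ → Module.Dual 𝕜 V) : HasPolynomialTraces fun a θ => 0 < ℓ θ (w a) := by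
  classical
  refine ⟨Module.finrank 𝕜 V, fun A => card_le_add_one_pow_of_forall_shatters
    (fun T hT => (mem_traces.1 hT).1) fun S hS => ?_⟩
  obtain ⟨T₀, hT₀, hST₀⟩ := hS.exists_superset
  have hSA : S ⊆ A := hST₀.trans (mem_traces.1 hT₀).1
  have hli : LinearIndependent 𝕜 fun a : S => w a := by
    refine linearIndependent_of_forall_exists_dual_pos_iff fun P => ?_
    obtain ⟨T, hT, hST⟩ := hS (t := {a ∈ S | ∃ h : a ∈ S, ⟨a, h⟩ ∈ P}) (Finset.filter_subset _ _)
    obtain ⟨-, θ, hθ⟩ := mem_traces.1 hT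
    refine ⟨ℓ θ, fun a => ?_⟩
    rw [← hθ a (hSA a.2)]
    simpa using Finset.ext_iff.1 hST a
  simpa using hli.fintype_card_le_finrank

theorem HasPolynomialTraces.of_determined {J : Type*} [Finite J] {b : α → Θ → Prop}
    {c : J → α → Θ → Prop} (hc : ∀ j, HasPolynomialTraces (c j))
    (hb : ∀ a θ θ', (∀ j, c j a θ ↔ c j a θ') → b a θ → b a θ') : HasPolynomialTraces b := by
  classical
  cases nonempty_fintype J
  choose N hN using hc
  refine ⟨∑ j, N j, fun A => ?_⟩
  let r (T : Finset α) (F : J → Finset α) : Prop :=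
    ∃ θ, (∀ a ∈ A, (a ∈ T ↔ b a θ)) ∧ ∀ j, ∀ a ∈ A, (a ∈ F j ↔ c j a θ)
  have hr : ∀ T ∈ traces b A, ∃ F, F ∈ Fintype.piFinset (fun j => traces (c j) A) ∧ r T F := by
    intro T hT
    obtain ⟨-, θ, hθ⟩ := mem_traces.1 hT
    have hF : ∀ j, ∀ a ∈ A, (a ∈ ({a ∈ A | c j a θ} : Finset α) ↔ c j a θ) := fun j a ha => by
      simp [ha]
    exact ⟨fun j => {a ∈ A | c j a θ}, Fintype.mem_piFinset.2 fun j =>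
      mem_traces.2 ⟨Finset.filter_subset _ _, θ, hF j⟩, θ, hθ, hF⟩
  have hr_inj : ∀ F ∈ Fintype.piFinset (fun j => traces (c j) A),
      {T | T ∈ traces b A ∧ r T F}.Subsingleton := by
    rintro F - T ⟨hT, θ, hTθ, hFθ⟩ T' ⟨hT', θ', hTθ', hFθ'⟩
    have hiff : ∀ a ∈ A, ∀ j, c j a θ ↔ c j a θ' := fun a ha j =>
      (hFθ j a ha).symm.trans (hFθ' j a ha)
    have mem_iff : ∀ a ∈ A, (a ∈ T ↔ a ∈ T') := fun a ha => by
      rw [hTθ a ha, hTθ' a ha]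
      exact ⟨hb a _ _ (hiff a ha), hb a _ _ fun j => (hiff a ha j).symm⟩
    exact Finset.ext fun a => ⟨fun h => (mem_iff a ((mem_traces.1 hT).1 h)).1 h,
      fun h => (mem_iff a ((mem_traces.1 hT').1 h)).2 h⟩
  calc (traces b A).card ≤ (Fintype.piFinset fun j => traces (c j) A).card :=
        Finset.card_le_card_of_forall_subsingleton r hr hr_inj
    _ = ∏ j, (traces (c j) A).card := Fintype.card_piFinset _
    _ ≤ ∏ j, (A.card + 1) ^ N j := Finset.prod_le_prod' fun j _ => hN j A
    _ = (A.card + 1) ^ ∑ j, N j := Finset.prod_pow_eq_pow_sum _ _ _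

lemma exists_add_one_pow_lt_two_pow (N : ℕ) : ∃ k : ℕ, (k + 1) ^ N < 2 ^ k := by
  have h := tendsto_pow_const_div_const_pow_of_one_lt N (r := (2 : ℝ)) one_lt_two
  obtain ⟨n, hn, hn1⟩ := ((h.eventually_lt_const one_half_pos).and
    (Filter.eventually_ge_atTop 1)).exists
  obtain ⟨k, rfl⟩ := Nat.exists_eq_add_of_le' hn1
  rw [div_lt_iff₀ (by positivity), pow_succ (2 : ℝ), mul_left_comm, one_div_mul_cancel two_ne_zero,
    mul_one] at hn
  exact ⟨k, by exact_mod_cast hn⟩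

theorem HasPolynomialTraces.exists_forall_card_eq {b : α → Θ → Prop}
    (hb : HasPolynomialTraces b) :
    ∃ k : ℕ, ∀ A : Finset α, A.card = k → ∃ S ⊆ A, ∀ θ, ¬ ∀ a ∈ A, (a ∈ S ↔ b a θ) := by
  obtain ⟨N, hN⟩ := hb
  obtain ⟨k, hk⟩ := exists_add_one_pow_lt_two_pow N
  refine ⟨k, fun A hA => ?_⟩
  by_contra! hshatter
  have hsub : A.powerset ⊆ traces b A := fun S hS =>
    mem_traces.2 ⟨Finset.mem_powerset.1 hS, hshatter S (Finset.mem_powerset.1 hS)⟩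
  have := (Finset.card_le_card hsub).trans (hN A)
  rw [Finset.card_powerset, hA] at this
  exact this.not_gt hk

end Traces

section SeparableFunctions

variable {α Θ : Type*}

/-- The algebra of finite sums of functions `(a, θ) ↦ u a * v θ`, presented as a tensor product;
such functions are evaluated by `SeparableFunction.evalHom`. -/
abbrev SeparableFunction (α Θ : Type*) : Type _ := (α → ℝ) ⊗[ℝ] (Θ → ℝ)

namespace SeparableFunction

/-- The value at `(a, θ)`, as a ring homomorphism, for use as a specialization of coefficients. -/
noncomputable def evalHom (a : α) (θ : Θ) : SeparableFunction α Θ →+* ℝ :=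
  (Algebra.TensorProduct.productMap (Pi.evalAlgHom ℝ (fun _ : α => ℝ) a)
    (Pi.evalAlgHom ℝ (fun _ : Θ => ℝ) θ)).toRingHom

@[simp]
lemma evalHom_tmul (a : α) (θ : Θ) (u : α → ℝ) (v : Θ → ℝ) :
    evalHom a θ (u ⊗ₜ[ℝ] v) = u a * v θ :=
  Algebra.TensorProduct.productMap_apply_tmul _ _ u v

theorem hasPolynomialTraces_eval_pos (r : SeparableFunction α Θ) :
    HasPolynomialTraces fun a θ => 0 < evalHom a θ r := by
  obtain ⟨S, rfl⟩ := TensorProduct.exists_finset r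
  have eval_eq : ∀ (a : α) (θ : Θ), evalHom a θ (∑ i ∈ S, i.1 ⊗ₜ i.2) =
      Fintype.linearCombination ℝ (fun i : S => i.1.2 θ) (fun i => i.1.1 a) := by
    intro a θ
    rw [map_sum, Fintype.linearCombination_apply, ← Finset.sum_coe_sort]
    simp only [evalHom_tmul, smul_eq_mul]
  simpa only [eval_eq] using hasPolynomialTraces_dual_pos (fun a (i : S) => i.1.1 a)
    (fun θ => Fintype.linearCombination ℝ fun i : S => i.1.2 θ)

theorem hasPolynomialTraces_exists_sign_eval_eq (S : Finset (SeparableFunction α Θ)[X])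
    (σ : (SeparableFunction α Θ)[X] → SignType) (l u : SeparableFunction α Θ) :
    HasPolynomialTraces fun a θ => ∃ t ∈ Icc (evalHom a θ l) (evalHom a θ u),
      ∀ p ∈ S, sign ((p.map (evalHom a θ)).eval t) = σ p := by
  classical
  obtain ⟨F, hF⟩ := exists_finset_forall_sign_eq_exists_sign_eval_eq S l u
  refine .of_determined (J := ↥(F ∪ F.image Neg.neg))
    (fun r => hasPolynomialTraces_eval_pos r.1) fun a θ θ' h => ?_
  rintro ⟨t, ht, hσ⟩
  have hsign : ∀ r ∈ F, sign (evalHom a θ r) = sign (evalHom a θ' r) := by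
    intro r hr
    have hpos := h ⟨r, Finset.mem_union_left _ hr⟩
    have hneg := h ⟨-r, Finset.mem_union_right _ (Finset.mem_image_of_mem _ hr)⟩
    simp only [map_neg, neg_pos] at hneg
    simp only [sign_apply, hpos, hneg]
  obtain ⟨t', ht', htt'⟩ := hF _ _ hsign t ht
  exact ⟨t', ht', fun p hp => (htt' p hp).symm.trans (hσ p hp)⟩

end SeparableFunction

end SeparableFunctions

section Segments

variable {α σ K : Type*}

lemma exists_map_evalRingHom_eq [CommSemiring K] [Finite σ] {d : ℕ} (f : α → MvPolynomial σ K)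
    (hf : ∀ a, (f a).totalDegree ≤ d) :
    ∃ G : MvPolynomial σ (α → K), ∀ a, G.map (Pi.evalRingHom (fun _ => K) a) = f a := by
  classical
  refine ⟨∑ m ∈ (Finsupp.finite_of_degree_le (σ := σ) d).toFinset,
    MvPolynomial.monomial m fun a => (f a).coeff m, fun a => ?_⟩
  ext m
  simp only [map_sum, MvPolynomial.map_monomial, MvPolynomial.coeff_sum,
    MvPolynomial.coeff_monomial]
  rw [Finset.sum_ite_eq']
  simp only [Finite.mem_toFinset, mem_ofPred_eq, Pi.evalRingHom_apply, ite_eq_left_iff]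
  exact fun hm => (MvPolynomial.coeff_eq_zero_of_totalDegree_lt
    ((hf a).trans_lt (not_le.1 hm))).symm

lemma eval_map_eval₂_C_add_C_mul_X {R A : Type*} [CommSemiring K] [CommSemiring R]
    [CommSemiring A] (φ : R →+* A) (t : A) (ι : K →+* R) (v w : σ → R) (G : MvPolynomial σ K) :
    ((G.eval₂ (C.comp ι) fun j => C (v j) + C (w j) * X).map φ).eval t =
      G.eval₂ (φ.comp ι) fun j => φ (v j) + φ (w j) * t := by
  rw [← coe_mapRingHom, ← coe_evalRingHom, MvPolynomial.hom_eval₂, MvPolynomial.hom_eval₂]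
  congr 1
  · ext c
    simp
  · ext j
    simp

theorem hasPolynomialTraces_exists_mem_segment [Finite σ] {d : ℕ}
    (f : α → MvPolynomial σ ℝ) (hf : ∀ a, (f a).totalDegree ≤ d) :
    HasPolynomialTraces fun a (e : (σ → ℝ) × (σ → ℝ)) =>
      ∃ z ∈ segment ℝ e.1 e.2, MvPolynomial.eval z (f a) = 0 := by
  obtain ⟨G, hG⟩ := exists_map_evalRingHom_eq f hf
  let P : (SeparableFunction α ((σ → ℝ) × (σ → ℝ)))[X] :=
    G.eval₂ (C.comp (algebraMap (α → ℝ) _))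
      fun j => C (1 ⊗ₜ fun e => e.1 j) + C (1 ⊗ₜ fun e => e.2 j - e.1 j) * X
  have eval_P : ∀ a e t, (P.map (SeparableFunction.evalHom a e)).eval t =
      MvPolynomial.eval (e.1 + t • (e.2 - e.1)) (f a) := by
    intro a e t
    rw [← hG a, MvPolynomial.eval_map]
    refine (eval_map_eval₂_C_add_C_mul_X _ _ _ _ _ _).trans ?_
    congr 1
    · ext u
      simp
    · ext j
      simp [mul_comm t]
  have h := SeparableFunction.hasPolynomialTraces_exists_sign_eval_eq {P} (fun _ => 0) 0 1
  simpa only [map_zero, map_one, Finset.mem_singleton, forall_eq, sign_eq_zero_iff, eval_P,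
    segment_eq_image', exists_mem_image] using h

end Segments

lemma IsAxisSegment.exists_eq_segment {p : ℕ} {s : Set (Fin p → ℝ)} (hs : IsAxisSegment p s) :
    ∃ x y, s = segment ℝ x y := by
  obtain ⟨x, i, ℓ, hℓ, rfl⟩ := hs
  let line : ℝ →ᵃ[ℝ] Fin p → ℝ := AffineMap.lineMap x (x + Pi.single i 1)
  refine ⟨line 0, line ℓ, ?_⟩
  rw [← image_segment, segment_eq_Icc hℓ]
  ext y
  simp [line, AffineMap.lineMap_apply, add_comm, eq_comm]

theorem axis_segments_cannot_shatter_hypersurfaces_general (d p : ℕ) :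
    ∃ k : ℕ, ∀ 𝒞 : Finset (Set (Fin p → ℝ)), 𝒞.card = k →
      (∀ H ∈ 𝒞, IsAlgHypersurface d p H) →
      ∃ S ⊆ 𝒞, ∀ x y : Fin p → ℝ,
        ¬ (∀ H ∈ 𝒞, (H ∈ S ↔ (H ∩ segment ℝ x y).Nonempty)) := by
  have hf : ∀ H : Set (Fin p → ℝ), ∃ f : MvPolynomial (Fin p) ℝ, f.totalDegree ≤ d ∧
      (IsAlgHypersurface d p H → H = {x | MvPolynomial.eval x f = 0}) := by
    intro H
    by_cases hH : IsAlgHypersurface d p H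
    · obtain ⟨f, -, hfd, hfH⟩ := hH
      exact ⟨f, hfd, fun _ => hfH⟩
    · exact ⟨0, by simp, fun h => absurd h hH⟩
  choose f hfd hfH using hf
  obtain ⟨k, hk⟩ := (hasPolynomialTraces_exists_mem_segment f hfd).exists_forall_card_eq
  refine ⟨k, fun 𝒞 hcard h𝒞 => ?_⟩
  obtain ⟨S, hS, hmiss⟩ := hk 𝒞 hcard
  refine ⟨S, hS, fun x y hhit => hmiss (x, y) fun H hH => (hhit H hH).trans ?_⟩
  have mem_iff : ∀ z, z ∈ H ↔ MvPolynomial.eval z (f H) = 0 :=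
    Set.ext_iff.1 (hfH H (h𝒞 H hH))
  simp only [Set.Nonempty, mem_inter_iff, mem_iff, and_comm]

/-- There is a constant `k` depending only on `d` and `p` such that axis-aligned line
segments in `ℝ^p` cannot shatter any collection of `k` algebraic hypersurfaces of
degree at most `d`: some subset `S` of the collection is hit by no axis-aligned segment. -/
theorem axis_segments_cannot_shatter_hypersurfaces (d p : ℕ) (hd : 0 < d) (hp : 0 < p) :
    ∃ k : ℕ, ∀ 𝒞 : Finset (Set (Fin p → ℝ)), 𝒞.card = k →
      (∀ H ∈ 𝒞, IsAlgHypersurface d p H) →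
      ∃ S ⊆ 𝒞, ∀ s : Set (Fin p → ℝ), IsAxisSegment p s →
        ¬ (∀ H ∈ 𝒞, (H ∈ S ↔ (H ∩ s).Nonempty)) := by
  obtain ⟨k, hk⟩ := axis_segments_cannot_shatter_hypersurfaces_general d p
  refine ⟨k, fun 𝒞 hcard h𝒞 => (hk 𝒞 hcard h𝒞).imp fun S => .imp_right fun hS s hs => ?_⟩
  obtain ⟨x, y, rfl⟩ := hs.exists_eq_segment
  exact hS x y
end

section
/- Let X and Y be real-valued random variables on a common probability space, taking values almost surely in [m, m+M] and [m', m'+M'] respectively, where m, m' ∈ ℝ and M, M' > 0, and suppose the joint law of (X, Y) has a density with respect to Lebesgue measure on ℝ² bounded above by κ. Then the random variable Z = X + Y has a density with respect to Lebesgue measure on ℝ bounded almost everywhere by K₁·κ, where K₁ = min{M, M'}. -/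
open MeasureTheory

/-!
If the law of `(X, Y)` is at most `κ` times planar Lebesgue measure and `X` lies in a set `S`, then
that law is at most `κ` times `(volume.restrict S).prod volume`. Pushing forward along addition, the
law of `X + Y` is at most `κ` times the convolution of `volume.restrict S` with `volume`, which by
translation invariance is `volume S • volume`. The same holds for `Y`, and domination by a multiple
of Lebesgue measure is the same as having a density bounded by that multiple.
-/

open scoped ENNReal

section RadonNikodym

variable {α : Type*} [MeasurableSpace α] {ν η : Measure α} {c : ℝ≥0∞}

theorem withDensity_le_smul_of_ae_le {ρ : α → ℝ≥0∞} (hρ : ∀ᵐ x ∂η, ρ x ≤ c) :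
    η.withDensity ρ ≤ c • η :=
  withDensity_const (μ := η) c ▸ withDensity_mono hρ

theorem rnDeriv_le_of_le_smul [SigmaFinite η] (h : ν ≤ c • η) :
    ∀ᵐ x ∂η, ν.rnDeriv η x ≤ c := by
  refine ae_le_of_forall_setLIntegral_le_of_sigmaFinite (Measure.measurable_rnDeriv ν η)
    fun s _ _ ↦ ?_
  calc ∫⁻ x in s, ν.rnDeriv η x ∂η
      ≤ ν s := Measure.setLIntegral_rnDeriv_le s
    _ ≤ c * η s := h s
    _ = ∫⁻ _ in s, c ∂η := (setLIntegral_const s c).symm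

theorem exists_eq_withDensity_le_of_le_smul [SFinite ν] [SigmaFinite η] (h : ν ≤ c • η) :
    ∃ g : α → ℝ≥0∞, ν = η.withDensity g ∧ ∀ᵐ x ∂η, g x ≤ c :=
  ⟨ν.rnDeriv η,
    (Measure.withDensity_rnDeriv_eq ν η (Measure.absolutelyContinuous_of_le_smul h)).symm,
    rnDeriv_le_of_le_smul h⟩

theorem le_smul_restrict_of_ae_mem (h : ν ≤ c • η) {A : Set α} (hA : ∀ᵐ x ∂ν, x ∈ A) :
    ν ≤ c • η.restrict A := by
  rw [← Measure.restrict_smul, ← Measure.restrict_eq_self_of_ae_mem hA]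
  exact Measure.restrict_mono_measure h A

end RadonNikodym

section Convolution

theorem conv_eq_measure_univ_smul {G : Type*} [AddMonoid G] [MeasurableSpace G] [MeasurableAdd₂ G]
    (ν η : Measure G) [SFinite η] [η.IsAddLeftInvariant] :
    ν.conv η = ν Set.univ • η := by
  refine Measure.ext_of_lintegral _ fun f hf ↦ ?_
  calc ∫⁻ z, f z ∂(ν.conv η)
      = ∫⁻ x, ∫⁻ y, f (x + y) ∂η ∂ν := Measure.lintegral_conv hf
    _ = ∫⁻ _, ∫⁻ y, f y ∂η ∂ν := by
        refine lintegral_congr fun x ↦ ?_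
        rw [← lintegral_map hf (measurable_const_add x), map_add_left_eq_self]
    _ = ∫⁻ y, f y ∂(ν Set.univ • η) := by
        rw [lintegral_const, lintegral_smul_measure, smul_eq_mul, mul_comm]

theorem map_add_le_smul_conv {G : Type*} [AddMonoid G] [MeasurableSpace G] [MeasurableAdd₂ G]
    {P : Measure (G × G)} {α β : Measure G} {c : ℝ≥0∞} (h : P ≤ c • α.prod β) :
    P.map (fun z ↦ z.1 + z.2) ≤ c • α.conv β :=
  (Measure.map_mono h measurable_add).trans_eq (Measure.map_smul ..)

variable {G : Type*} [AddCommMonoid G] [MeasurableSpace G] [MeasurableAdd₂ G]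
  {η : Measure G} [SFinite η] [η.IsAddLeftInvariant]
  {P : Measure (G × G)} {c : ℝ≥0∞} {S T : Set G}

theorem map_add_le_of_ae_fst_mem (hP : P ≤ c • η.prod η) (hS : ∀ᵐ z ∂P, z.1 ∈ S) :
    P.map (fun z ↦ z.1 + z.2) ≤ (η S * c) • η := by
  have hPS : P ≤ c • (η.restrict S).prod η := by
    simpa only [← Measure.prod_restrict, Measure.restrict_univ] using
      le_smul_restrict_of_ae_mem hP (A := S ×ˢ Set.univ) (hS.mono fun z hz ↦ ⟨hz, trivial⟩)
  simpa only [conv_eq_measure_univ_smul, Measure.restrict_apply_univ, smul_smul, mul_comm]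
    using map_add_le_smul_conv hPS

theorem map_add_le_of_ae_snd_mem (hP : P ≤ c • η.prod η) (hT : ∀ᵐ z ∂P, z.2 ∈ T) :
    P.map (fun z ↦ z.1 + z.2) ≤ (η T * c) • η := by
  have hPT : P ≤ c • η.prod (η.restrict T) := by
    simpa only [← Measure.prod_restrict, Measure.restrict_univ] using
      le_smul_restrict_of_ae_mem hP (A := Set.univ ×ˢ T) (hT.mono fun z hz ↦ ⟨trivial, hz⟩)
  simpa only [Measure.conv_comm η, conv_eq_measure_univ_smul, Measure.restrict_apply_univ,
    smul_smul, mul_comm] using map_add_le_smul_conv hPT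

theorem map_add_le_of_ae_mem (hP : P ≤ c • η.prod η)
    (hS : ∀ᵐ z ∂P, z.1 ∈ S) (hT : ∀ᵐ z ∂P, z.2 ∈ T) :
    P.map (fun z ↦ z.1 + z.2) ≤ (min (η S) (η T) * c) • η := by
  rcases min_choice (η S) (η T) with h | h <;> rw [h]
  · exact map_add_le_of_ae_fst_mem hP hS
  · exact map_add_le_of_ae_snd_mem hP hT

end Convolution

theorem sum_of_kappa_bounded_is_bounded_general
    {G Ω : Type*} [AddCommMonoid G] [MeasurableSpace G] [MeasurableAdd₂ G]
    (η : Measure G) [SigmaFinite η] [η.IsAddLeftInvariant]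
    [MeasurableSpace Ω] (μ : Measure Ω) [SFinite μ]
    {X Y : Ω → G} (hXY : AEMeasurable (fun ω ↦ (X ω, Y ω)) μ)
    {S T : Set G} (hS : MeasurableSet S) (hT : MeasurableSet T)
    (hX : ∀ᵐ ω ∂μ, X ω ∈ S) (hY : ∀ᵐ ω ∂μ, Y ω ∈ T) {κ : ℝ≥0∞}
    (hjoint : ∃ ρ : G × G → ℝ≥0∞,
      μ.map (fun ω ↦ (X ω, Y ω)) = (η.prod η).withDensity ρ ∧
      ∀ᵐ z ∂(η.prod η), ρ z ≤ κ) :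
    ∃ g : G → ℝ≥0∞,
      μ.map (fun ω ↦ X ω + Y ω) = η.withDensity g ∧
      ∀ᵐ t ∂η, g t ≤ min (η S) (η T) * κ := by
  obtain ⟨ρ, hρ, hρκ⟩ := hjoint
  have law_le : μ.map (fun ω ↦ (X ω, Y ω)) ≤ κ • η.prod η :=
    hρ ▸ withDensity_le_smul_of_ae_le hρκ
  have law_sum_le := map_add_le_of_ae_mem law_le
    ((ae_map_iff hXY (measurable_fst hS)).2 hX) ((ae_map_iff hXY (measurable_snd hT)).2 hY)
  rw [AEMeasurable.map_map_of_aemeasurable measurable_add.aemeasurable hXY] at law_sum_le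
  exact exists_eq_withDensity_le_of_le_smul law_sum_le

/-- If `(X, Y)` has a joint density on `ℝ²` bounded by `κ`, with `X ∈ [m, m+M]` and
`Y ∈ [m', m'+M']` almost surely, then `Z = X + Y` has a density on `ℝ` bounded
almost everywhere by `min{M, M'}·κ`. -/
theorem sum_of_kappa_bounded_is_bounded
    (Ω : Type*) [MeasurableSpace Ω] (μ : Measure Ω) [IsProbabilityMeasure μ]
    (X Y : Ω → ℝ) (hXY : Measurable fun ω => (X ω, Y ω))
    (m m' M M' κ : ℝ) (hM : 0 < M) (hM' : 0 < M')
    (hX : ∀ᵐ ω ∂μ, X ω ∈ Set.Icc m (m + M))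
    (hY : ∀ᵐ ω ∂μ, Y ω ∈ Set.Icc m' (m' + M'))
    (hjoint : ∃ ρ : ℝ × ℝ → ENNReal,
      Measure.map (fun ω => (X ω, Y ω)) μ = (volume : Measure (ℝ × ℝ)).withDensity ρ ∧
      ∀ᵐ z ∂(volume : Measure (ℝ × ℝ)), ρ z ≤ ENNReal.ofReal κ) :
    ∃ g : ℝ → ENNReal,
      Measure.map (fun ω => X ω + Y ω) μ = (volume : Measure ℝ).withDensity g ∧
      ∀ᵐ t ∂(volume : Measure ℝ), g t ≤ ENNReal.ofReal (min M M' * κ) := by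
  simpa only [Real.volume_Icc, add_sub_cancel_left, ← ENNReal.ofReal_min,
    ← ENNReal.ofReal_mul (le_min hM.le hM'.le)] using
    sum_of_kappa_bounded_is_bounded_general volume μ hXY.aemeasurable
      measurableSet_Icc measurableSet_Icc hX hY hjoint
end

section
/- Let X and Y be real-valued random variables on a common probability space, taking values almost surely in [m, m+M] and [m', m'+M'] respectively, where m, m' > 0 and M, M' > 0, and suppose the joint law of (X, Y) has a density with respect to Lebesgue measure on ℝ² bounded above by κ. Then the random variable Z = X·Y has a density with respect to Lebesgue measure on ℝ bounded almost everywhere by K₂·κ, where K₂ = min{M/m, M'/m'}. -/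
open MeasureTheory

/-!
Having a density at most `c` with respect to a σ-finite measure `ν` is the same as being dominated,
as a measure, by `c • ν`. If `X ∈ A` almost surely, the law of `(X, Y)` is thus dominated by
`κ • (volume.restrict A).prod volume`, whose image under multiplication is again a multiple of
Lebesgue measure: multiplication by `x` scales `volume` by `1 / |x|`, so the factor is
`κ * ∫ x in A, 1 / |x|`. Exchanging `X` and `Y` gives the other bound. For `A = [m, m + M]` the
integrand is at most `1 / m`.
-/

open scoped ENNReal

section BoundedDensity

variable {α : Type*} [MeasurableSpace α] {μ ν : Measure α} {c : ℝ≥0∞}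

theorem withDensity_le_smul_of_ae_le_s5 {f : α → ℝ≥0∞} (hf : ∀ᵐ a ∂ν, f a ≤ c) :
    ν.withDensity f ≤ c • ν :=
  (withDensity_mono hf).trans_eq (withDensity_const c)

theorem rnDeriv_ae_le_of_le_smul [SigmaFinite ν] (h : μ ≤ c • ν) :
    ∀ᵐ a ∂ν, μ.rnDeriv ν a ≤ c := by
  refine ae_le_of_forall_setLIntegral_le_of_sigmaFinite (Measure.measurable_rnDeriv μ ν)
    fun s _ _ ↦ ?_
  calc ∫⁻ a in s, μ.rnDeriv ν a ∂ν
      ≤ μ s := Measure.setLIntegral_rnDeriv_le s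
    _ ≤ c * ν s := h s
    _ = ∫⁻ _ in s, c ∂ν := (setLIntegral_const s c).symm

theorem exists_eq_withDensity_ae_le_of_le_smul [SFinite μ] [SigmaFinite ν] (h : μ ≤ c • ν) :
    ∃ g : α → ℝ≥0∞, μ = ν.withDensity g ∧ ∀ᵐ a ∂ν, g a ≤ c :=
  ⟨μ.rnDeriv ν,
    (Measure.withDensity_rnDeriv_eq μ ν (Measure.absolutelyContinuous_of_le_smul h)).symm,
    rnDeriv_ae_le_of_le_smul h⟩

end BoundedDensity

theorem mconv_volume (ν : Measure ℝ) [SFinite ν] (h₀ : ν {0} = 0) :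
    ν ∗ₘ volume = (∫⁻ x, ‖x‖ₑ⁻¹ ∂ν) • volume := by
  ext s hs
  have volume_slice : ∀ᵐ x ∂ν, volume ((fun y ↦ x * y) ⁻¹' s) = ‖x‖ₑ⁻¹ * volume s := by
    filter_upwards [compl_mem_ae_iff.2 h₀] with x hx
    rw [Real.volume_preimage_mul_left hx, ← Real.enorm_eq_ofReal_abs, enorm_inv hx]
  calc (ν ∗ₘ volume) s
      = ∫⁻ x, volume ((fun y ↦ x * y) ⁻¹' s) ∂ν := by
        rw [Measure.mconv, Measure.map_apply measurable_mul hs,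
          Measure.prod_apply (measurable_mul hs)]
        rfl
    _ = ∫⁻ x, ‖x‖ₑ⁻¹ * volume s ∂ν := lintegral_congr_ae volume_slice
    _ = (∫⁻ x, ‖x‖ₑ⁻¹ ∂ν) * volume s := lintegral_mul_const _ (by fun_prop)

section JointLaw

variable {Ω α β : Type*} [MeasurableSpace Ω] [MeasurableSpace α] [MeasurableSpace β]
  {μ : Measure Ω} {ν : Measure α} {τ : Measure β} [SFinite ν] [SFinite τ] {c : ℝ≥0∞}

theorem map_prodMk_le_smul_prod_swap {X : Ω → α} {Y : Ω → β}
    (hXY : AEMeasurable (fun ω ↦ (X ω, Y ω)) μ)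
    (h : μ.map (fun ω ↦ (X ω, Y ω)) ≤ c • ν.prod τ) :
    μ.map (fun ω ↦ (Y ω, X ω)) ≤ c • τ.prod ν := by
  calc μ.map (fun ω ↦ (Y ω, X ω))
      = (μ.map fun ω ↦ (X ω, Y ω)).map Prod.swap :=
        (AEMeasurable.map_map_of_aemeasurable measurable_swap.aemeasurable hXY).symm
    _ ≤ (c • ν.prod τ).map Prod.swap := Measure.map_mono h measurable_swap
    _ = c • τ.prod ν := by rw [Measure.map_smul, Measure.prod_swap]

theorem map_prodMk_le_smul_restrict_prod {X : Ω → α} {Y : Ω → β}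
    (hXY : AEMeasurable (fun ω ↦ (X ω, Y ω)) μ)
    {A : Set α} (hA : MeasurableSet A) (hX : ∀ᵐ ω ∂μ, X ω ∈ A)
    (h : μ.map (fun ω ↦ (X ω, Y ω)) ≤ c • ν.prod τ) :
    μ.map (fun ω ↦ (X ω, Y ω)) ≤ c • (ν.restrict A).prod τ := by
  have fst_mem : ∀ᵐ z ∂μ.map (fun ω ↦ (X ω, Y ω)), z ∈ A ×ˢ (Set.univ : Set β) :=
    (ae_map_iff hXY (hA.prod MeasurableSet.univ)).2 (hX.mono fun _ hω ↦ ⟨hω, Set.mem_univ _⟩)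
  calc μ.map (fun ω ↦ (X ω, Y ω))
      = (μ.map fun ω ↦ (X ω, Y ω)).restrict (A ×ˢ Set.univ) :=
        (Measure.restrict_eq_self_of_ae_mem fst_mem).symm
    _ ≤ (c • ν.prod τ).restrict (A ×ˢ Set.univ) := Measure.restrict_mono_measure h _
    _ = c • (ν.restrict A).prod τ := by
        rw [Measure.restrict_smul, ← Measure.prod_restrict, Measure.restrict_univ]

end JointLaw

theorem map_mul_eq_map_map_prodMk {Ω M : Type*} [MeasurableSpace Ω] [MeasurableSpace M] [Mul M]
    [MeasurableMul₂ M] {μ : Measure Ω} {X Y : Ω → M} (hXY : AEMeasurable (fun ω ↦ (X ω, Y ω)) μ) :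
    μ.map (fun ω ↦ X ω * Y ω) = (μ.map fun ω ↦ (X ω, Y ω)).map (fun z ↦ z.1 * z.2) :=
  (AEMeasurable.map_map_of_aemeasurable measurable_mul.aemeasurable hXY).symm

theorem map_mul_le_smul_volume {Ω : Type*} [MeasurableSpace Ω] {μ : Measure Ω} {X Y : Ω → ℝ}
    (hXY : AEMeasurable (fun ω ↦ (X ω, Y ω)) μ)
    {A : Set ℝ} (hA : MeasurableSet A) (hX : ∀ᵐ ω ∂μ, X ω ∈ A) {c : ℝ≥0∞}
    (h : μ.map (fun ω ↦ (X ω, Y ω)) ≤ c • volume) :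
    μ.map (fun ω ↦ X ω * Y ω) ≤ ((∫⁻ x in A, ‖x‖ₑ⁻¹) * c) • volume := by
  calc μ.map (fun ω ↦ X ω * Y ω)
      = (μ.map fun ω ↦ (X ω, Y ω)).map (fun z ↦ z.1 * z.2) :=
        map_mul_eq_map_map_prodMk hXY
    _ ≤ (c • (volume.restrict A).prod volume).map (fun z ↦ z.1 * z.2) :=
        Measure.map_mono (map_prodMk_le_smul_restrict_prod hXY hA hX h) measurable_mul
    _ = c • (volume.restrict A ∗ₘ volume) := Measure.map_smul _ _ _
    _ = ((∫⁻ x in A, ‖x‖ₑ⁻¹) * c) • volume := by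
        have restrict_zero : volume.restrict A {(0 : ℝ)} = 0 := measure_singleton 0
        rw [mconv_volume _ restrict_zero, smul_smul, mul_comm]

theorem setLIntegral_Icc_inv_enorm_le {m : ℝ} (hm : 0 < m) (M : ℝ) :
    ∫⁻ x in Set.Icc m (m + M), ‖x‖ₑ⁻¹ ≤ ENNReal.ofReal (M / m) := by
  calc ∫⁻ x in Set.Icc m (m + M), ‖x‖ₑ⁻¹
      ≤ ∫⁻ _ in Set.Icc m (m + M), (ENNReal.ofReal m)⁻¹ := by
        refine setLIntegral_mono measurable_const fun x hx ↦ ?_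
        rw [Real.enorm_of_nonneg (hm.le.trans hx.1)]
        gcongr
        exact hx.1
    _ = ENNReal.ofReal (M / m) := by
        rw [setLIntegral_const, Real.volume_Icc, add_sub_cancel_left, ENNReal.ofReal_div_of_pos hm,
          ENNReal.div_eq_inv_mul]

theorem min_setLIntegral_Icc_inv_enorm_mul_le {m m' M M' : ℝ} (hm : 0 < m) (hm' : 0 < m')
    (hM : 0 ≤ M) (hM' : 0 ≤ M') (κ : ℝ) :
    min (∫⁻ x in Set.Icc m (m + M), ‖x‖ₑ⁻¹) (∫⁻ y in Set.Icc m' (m' + M'), ‖y‖ₑ⁻¹) *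
      ENNReal.ofReal κ ≤ ENNReal.ofReal (min (M / m) (M' / m') * κ) := by
  rw [ENNReal.ofReal_mul (by positivity), ENNReal.ofReal_min]
  gcongr
  · exact setLIntegral_Icc_inv_enorm_le hm M
  · exact setLIntegral_Icc_inv_enorm_le hm' M'

theorem product_of_kappa_bounded_is_bounded_general
    {Ω : Type*} [MeasurableSpace Ω] {μ : Measure Ω} {X Y : Ω → ℝ}
    (hXY : AEMeasurable (fun ω ↦ (X ω, Y ω)) μ)
    {A B : Set ℝ} (hA : MeasurableSet A) (hB : MeasurableSet B)
    (hX : ∀ᵐ ω ∂μ, X ω ∈ A) (hY : ∀ᵐ ω ∂μ, Y ω ∈ B) {κ : ℝ≥0∞}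
    (hjoint : ∃ ρ : ℝ × ℝ → ℝ≥0∞,
      μ.map (fun ω ↦ (X ω, Y ω)) = volume.withDensity ρ ∧ ∀ᵐ z, ρ z ≤ κ) :
    ∃ g : ℝ → ℝ≥0∞, μ.map (fun ω ↦ X ω * Y ω) = volume.withDensity g ∧
      ∀ᵐ t, g t ≤ min (∫⁻ x in A, ‖x‖ₑ⁻¹) (∫⁻ y in B, ‖y‖ₑ⁻¹) * κ := by
  obtain ⟨ρ, hρ, hρκ⟩ := hjoint
  have joint_le : μ.map (fun ω ↦ (X ω, Y ω)) ≤ κ • volume :=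
    hρ.trans_le (withDensity_le_smul_of_ae_le_s5 hρκ)
  have le_of_fst : μ.map (fun ω ↦ X ω * Y ω) ≤ ((∫⁻ x in A, ‖x‖ₑ⁻¹) * κ) • volume :=
    map_mul_le_smul_volume hXY hA hX joint_le
  have le_of_snd : μ.map (fun ω ↦ X ω * Y ω) ≤ ((∫⁻ y in B, ‖y‖ₑ⁻¹) * κ) • volume := by
    simpa only [mul_comm (Y _)] using map_mul_le_smul_volume (hXY.snd.prodMk hXY.fst) hB hY
      (map_prodMk_le_smul_prod_swap hXY joint_le)
  have : SFinite (μ.map fun ω ↦ X ω * Y ω) := by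
    rw [map_mul_eq_map_map_prodMk hXY, hρ]
    infer_instance
  refine exists_eq_withDensity_ae_le_of_le_smul ?_
  rcases min_choice (∫⁻ x in A, ‖x‖ₑ⁻¹) (∫⁻ y in B, ‖y‖ₑ⁻¹) with hmin | hmin <;> rw [hmin]
  exacts [le_of_fst, le_of_snd]

/-- If `(X, Y)` has a joint density on `ℝ²` bounded by `κ`, with `X ∈ [m, m+M]` and
`Y ∈ [m', m'+M']` almost surely for `m, m' > 0`, then `Z = X·Y` has a density on `ℝ`
bounded almost everywhere by `min{M/m, M'/m'}·κ`. -/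
theorem product_of_kappa_bounded_is_bounded
    (Ω : Type*) [MeasurableSpace Ω] (μ : Measure Ω) [IsProbabilityMeasure μ]
    (X Y : Ω → ℝ) (hXY : Measurable fun ω => (X ω, Y ω))
    (m m' M M' κ : ℝ) (hm : 0 < m) (hm' : 0 < m') (hM : 0 < M) (hM' : 0 < M')
    (hX : ∀ᵐ ω ∂μ, X ω ∈ Set.Icc m (m + M))
    (hY : ∀ᵐ ω ∂μ, Y ω ∈ Set.Icc m' (m' + M'))
    (hjoint : ∃ ρ : ℝ × ℝ → ENNReal,
      Measure.map (fun ω => (X ω, Y ω)) μ = (volume : Measure (ℝ × ℝ)).withDensity ρ ∧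
      ∀ᵐ z ∂(volume : Measure (ℝ × ℝ)), ρ z ≤ ENNReal.ofReal κ) :
    ∃ g : ℝ → ENNReal,
      Measure.map (fun ω => X ω * Y ω) μ = (volume : Measure ℝ).withDensity g ∧
      ∀ᵐ t ∂(volume : Measure ℝ), g t ≤ ENNReal.ofReal (min (M / m) (M' / m') * κ) := by
  obtain ⟨g, hg, hgκ⟩ := product_of_kappa_bounded_is_bounded_general hXY.aemeasurable
    measurableSet_Icc measurableSet_Icc hX hY hjoint
  exact ⟨g, hg, hgκ.mono fun _ ht ↦
    ht.trans (min_setLIntegral_Icc_inv_enorm_mul_le hm hm' hM.le hM'.le κ)⟩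
end

section
/- Let n ≥ 1 and m ≥ 1. For each i ∈ {1,…,m}, let V_i be a set with n elements, let d_i : V_i × V_i → ℝ≥0 be a symmetric function, and let L_i be an arbitrary real-valued function on the set of all edge sets (sets of unordered pairs of distinct elements) of V_i. For r ≥ 0 define h_r(i) = L_i(E_r(d_i)), where E_r(d) = {{u, v} : u ≠ v, d(u, v) ≤ r} is the threshold graph at parameter r. Suppose there exist witnesses w_1,…,w_m ∈ ℝ such that for every b ∈ {0,1}^m there exists r ≥ 0 with (h_r(i) > w_i ⟺ b_i = 1) for all i ∈ {1,…,m}. Then 2^m ≤ m·(n(n−1)/2) + 1. (Consequently, the pseudo-dimension of the class {r ↦ h_r} is O(log n).) -/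
/-- The edge set of the threshold graph at parameter `r`, for a (symmetric) distance
function `d` on the vertex set `V`: pairs of distinct vertices at distance at most `r`. -/
def thresholdEdges {V : Type*} (d : V → V → ℝ) (r : ℝ) : Set (V × V) :=
  {e : V × V | e.1 ≠ e.2 ∧ d e.1 e.2 ≤ r}

/-!
As `r` grows, the threshold graphs of all the instances only gain edges. Their disjoint union is
therefore an increasing family of sets of unordered pairs, and a chain of subsets of an
`N`-element set has at most `N + 1` members. Each sign pattern needs its own member of the chain.
-/

open Set

theorem ncard_le_card_add_one_of_isChain {β : Type*} [Finite β] {C : Set (Set β)}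
    (hC : IsChain (· ⊆ ·) C) : C.ncard ≤ Nat.card β + 1 := by
  have ncard_injOn : InjOn ncard C := by
    intro s hs t ht hst
    rcases hC.total hs ht with h | h
    · exact eq_of_subset_of_ncard_le h hst.ge
    · exact (eq_of_subset_of_ncard_le h hst.le).symm
  calc C.ncard ≤ (Iic (Nat.card β)).ncard :=
        ncard_le_ncard_of_injOn ncard (fun s _ => ncard_le_card s) ncard_injOn (finite_Iic _)
    _ = Nat.card β + 1 := by rw [ncard_eq_toFinset_card', toFinset_Iic, Nat.card_Iic]

/-- Pseudo-shattering of the whole index set `ι` by the family `r ↦ h r`, with witness vector `w`: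
every sign pattern is realized by some parameter. The values `h r i` may lie in any ordered
type. -/
def PseudoShatters {α ι R : Type*} [LT R] (h : α → ι → R) (w : ι → R) : Prop :=
  ∀ b : ι → Bool, ∃ r, ∀ i, w i < h r i ↔ b i = true

theorem PseudoShatters.two_pow_card_le_ncard_range {α ι R β : Type*} [LT R] [Fintype ι]
    {h : α → ι → R} {w : ι → R} (hw : PseudoShatters h w) {f : α → β}
    (hf : h.FactorsThrough f) (hfin : (range f).Finite) :
    2 ^ Fintype.card ι ≤ (range f).ncard := by
  choose r hr using hw
  have injective_comp : Function.Injective (f ∘ r) := by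
    intro b b' hbb'
    funext i
    rw [Bool.eq_iff_iff, ← hr b i, ← hr b' i, hf hbb']
  calc 2 ^ Fintype.card ι = (range (f ∘ r)).ncard := by
        rw [ncard_range_of_injective injective_comp, Nat.card_fun]
        simp only [Nat.card_eq_fintype_card, Fintype.card_bool]
    _ ≤ (range f).ncard := ncard_le_ncard (range_comp_subset_range r f) hfin

section JointThresholdEdges

variable {ι : Type*} {V : ι → Type*} (d : ∀ i, V i → V i → ℝ) (hd : ∀ i u v, d i u v = d i v u)

/-- The edge set of the disjoint union over `i` of the threshold graphs of `d i` at the common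
parameter `r`. Edges are unordered pairs here, so that an instance on `n` points contributes
at most `n.choose 2` of them. -/
def jointThresholdEdges (r : ℝ) : Set (Σ i, {e : Sym2 (V i) // ¬e.IsDiag}) :=
  {p | Sym2.lift ⟨d p.1, hd p.1⟩ p.2.1 ≤ r}

theorem jointThresholdEdges_mono : Monotone (jointThresholdEdges d hd) :=
  fun _ _ hrs _ hp => le_trans hp hrs

theorem mem_thresholdEdges_iff_mem_jointThresholdEdges {i : ι} {u v : V i} {r : ℝ} :
    (u, v) ∈ thresholdEdges (d i) r ↔
      ∃ huv : u ≠ v, ⟨i, s(u, v), mt Sym2.mk_isDiag_iff.1 huv⟩ ∈ jointThresholdEdges d hd r :=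
  exists_prop.symm

theorem thresholdEdges_factorsThrough_jointThresholdEdges :
    (fun r i => thresholdEdges (d i) r).FactorsThrough (jointThresholdEdges d hd) := by
  intro r s hrs
  ext i ⟨u, v⟩
  simp only [mem_thresholdEdges_iff_mem_jointThresholdEdges d hd, hrs]

end JointThresholdEdges

theorem card_sigma_sym2_not_isDiag {ι : Type*} [Fintype ι] (V : ι → Type*) [∀ i, Fintype (V i)] :
    Nat.card (Σ i, {e : Sym2 (V i) // ¬e.IsDiag}) = ∑ i, (Fintype.card (V i)).choose 2 := by
  classical
  simp only [Nat.card_eq_fintype_card, Fintype.card_sigma, Sym2.card_subtype_not_diag]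

theorem pseudo_shattering_bound_threshold_graphs_general {ι : Type*} [Fintype ι]
    {V : ι → Type*} [∀ i, Fintype (V i)] {R : Type*} [LT R]
    (d : ∀ i, V i → V i → ℝ) (hd : ∀ i u v, d i u v = d i v u)
    (L : ∀ i, Set (V i × V i) → R) (w : ι → R)
    (hw : PseudoShatters (fun r i => L i (thresholdEdges (d i) r)) w) :
    2 ^ Fintype.card ι ≤ ∑ i, (Fintype.card (V i)).choose 2 + 1 := by
  have hfactors : (fun r i => L i (thresholdEdges (d i) r)).FactorsThrough
      (jointThresholdEdges d hd) :=
    (thresholdEdges_factorsThrough_jointThresholdEdges d hd).comp_left fun E i => L i (E i)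
  calc 2 ^ Fintype.card ι ≤ (range (jointThresholdEdges d hd)).ncard :=
        hw.two_pow_card_le_ncard_range hfactors (toFinite _)
    _ ≤ Nat.card (Σ i, {e : Sym2 (V i) // ¬e.IsDiag}) + 1 :=
        ncard_le_card_add_one_of_isChain (jointThresholdEdges_mono d hd).isChain_range
    _ = ∑ i, (Fintype.card (V i)).choose 2 + 1 := by rw [card_sigma_sym2_not_isDiag]

/-- If `m` threshold-graph instances on `n`-point sets are pseudo-shattered by the
one-parameter family `r ↦ L_i(E_r(d_i))` (with witnesses `w_i`), then
`2^m ≤ m·(n(n−1)/2) + 1`; consequently the pseudo-dimension is `O(log n)`. -/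
theorem pseudo_shattering_bound_threshold_graphs
    (n m : ℕ) (hn : 1 ≤ n) (hm : 1 ≤ m)
    (V : Fin m → Type*) [∀ i, Fintype (V i)]
    (hcard : ∀ i, Fintype.card (V i) = n)
    (d : ∀ i, V i → V i → ℝ)
    (hd0 : ∀ i u v, 0 ≤ d i u v)
    (hdsymm : ∀ i u v, d i u v = d i v u)
    (L : ∀ i, Set (V i × V i) → ℝ)
    (w : Fin m → ℝ)
    (hshatter : ∀ bvec : Fin m → Bool, ∃ r : ℝ, 0 ≤ r ∧
      ∀ i, (w i < L i (thresholdEdges (d i) r) ↔ bvec i = true)) :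
    2 ^ m ≤ m * (n * (n - 1) / 2) + 1 := by
  simpa [hcard, Nat.choose_two_right] using
    pseudo_shattering_bound_threshold_graphs_general d hdsymm L w
      fun b => (hshatter b).imp fun _ hr => hr.2
end

section
/- Let d and p be positive integers. There exists a constant C depending only on d and p such that for every positive integer k and every collection 𝒞 of k algebraic hypersurfaces of degree at most d in ℝ^p, the number of distinct subsets of 𝒞 that are hit by some axis-aligned line segment is at most C·k^(2^p + 1). -/
/-!
Lines in a fixed coordinate direction are parametrized by the other coordinates. On such a line the
hypersurfaces are cut out by univariate polynomials, and which of them a segment meets depends only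
on the positions of its two end points among the roots. Hence a single line contributes
`O(k ^ 2)` subsets, and two lines contribute the same subsets as soon as an order automorphism of
`ℝ` matches the signs of the restricted polynomials. It remains to count lines up to such matchings.

Whether two specializations of a finite family of univariate polynomials match is decided by the
signs of finitely many polynomials in the coefficients. This is proved by induction on the degree:
between consecutive roots of its derivative a polynomial is monotone, and its signs at the roots of
polynomials of lower degree are those of pseudo-remainders. A family is matched as soon as its pairs
are, so `n` polynomials in `p + 1` variables lead to `O(n ^ 2)` polynomials of bounded degree in `p`
variables whose signs decide the matching. By induction on `p`, `n` polynomials in `p` variables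
have `O(n ^ (2 ^ p - 1))` sign vectors, and the lines in `ℝ ^ p` contribute
`O(k ^ (2 * (2 ^ (p - 1) - 1)) * k ^ 2) = O(k ^ 2 ^ p)` subsets.
-/

open Finset Polynomial SignType Filter

universe u

section OrderIsomorphisms

variable {α : Type*} [LinearOrder α]

/-- The position of `t` relative to the finite set `Z`: the points of `Z` and the open intervals
between them are numbered from left to right, the gaps by even and the points by odd numbers. -/
def rankAmong (Z : Finset α) (t : α) : ℕ := #{z ∈ Z | z < t} + #{z ∈ Z | z ≤ t}

lemma rankAmong_mono (Z : Finset α) : Monotone (rankAmong Z) := fun _ _ hst =>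
  add_le_add (card_le_card (monotone_filter_right Z fun _ _ hz => hz.trans_le hst))
    (card_le_card (monotone_filter_right Z fun _ _ hz => hz.trans hst))

lemma rankAmong_le (Z : Finset α) (t : α) : rankAmong Z t ≤ 2 * #Z := by
  rw [two_mul]
  exact add_le_add (card_filter_le _ _) (card_filter_le _ _)

lemma rankAmong_eq_iff {Z : Finset α} {s t : α} :
    rankAmong Z s = rankAmong Z t ↔ ∀ z ∈ Z, (z < s ↔ z < t) ∧ (z ≤ s ↔ z ≤ t) := by
  refine ⟨fun h => ?_, fun h => ?_⟩
  · wlog hst : s ≤ t generalizing s t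
    · exact fun z hz => (this h.symm (le_of_not_ge hst) z hz).imp Iff.symm Iff.symm
    have hlt : {z ∈ Z | z < s} ⊆ {z ∈ Z | z < t} :=
      monotone_filter_right Z fun _ _ hz => hz.trans_le hst
    have hle : {z ∈ Z | z ≤ s} ⊆ {z ∈ Z | z ≤ t} :=
      monotone_filter_right Z fun _ _ hz => hz.trans hst
    have hcard := (add_eq_add_iff_eq_and_eq (card_le_card hlt) (card_le_card hle)).1 h
    exact fun z hz =>
      ⟨filter_inj'.1 (eq_of_subset_of_card_le hlt hcard.1.ge) hz,
        filter_inj'.1 (eq_of_subset_of_card_le hle hcard.2.ge) hz⟩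
  · rw [rankAmong, rankAmong, filter_congr fun z hz => (h z hz).1,
      filter_congr fun z hz => (h z hz).2]

lemma eq_of_rankAmong_eq {Z : Finset α} {s z : α} (hz : z ∈ Z)
    (h : rankAmong Z s = rankAmong Z z) : s = z :=
  have hsz := rankAmong_eq_iff.1 h z hz
  (not_lt.1 fun hlt => lt_irrefl z (hsz.1.1 hlt)).antisymm (hsz.2.2 le_rfl)

lemma exists_mem_Ioo_of_notMem {Z : Finset α} {l r c : α} (hl : l ∈ Z) (hr : r ∈ Z) (hlc : l ≤ c)
    (hcr : c ≤ r) (hc : c ∉ Z) :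
    ∃ a ∈ Z, ∃ b ∈ Z, c ∈ Set.Ioo a b ∧ ∀ z ∈ Z, z ≤ a ∨ b ≤ z := by
  obtain ⟨a, ha, ha_max⟩ := exists_max_image {z ∈ Z | z ≤ c} id ⟨l, mem_filter.2 ⟨hl, hlc⟩⟩
  obtain ⟨b, hb, hb_min⟩ := exists_min_image {z ∈ Z | c ≤ z} id ⟨r, mem_filter.2 ⟨hr, hcr⟩⟩
  rw [mem_filter] at ha hb
  exact ⟨a, ha.1, b, hb.1, ⟨ha.2.lt_of_ne (ne_of_mem_of_not_mem ha.1 hc),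
      hb.2.lt_of_ne' (ne_of_mem_of_not_mem hb.1 hc)⟩,
    fun z hz => (le_total z c).imp (fun h => ha_max z (mem_filter.2 ⟨hz, h⟩))
      fun h => hb_min z (mem_filter.2 ⟨hz, h⟩)⟩

lemma rankAmong_eq_of_mem_Ioo {Z : Finset α} {a b s t : α} (hZ : ∀ z ∈ Z, z ≤ a ∨ b ≤ z)
    (hs : s ∈ Set.Ioo a b) (ht : t ∈ Set.Ioo a b) : rankAmong Z s = rankAmong Z t :=
  rankAmong_eq_iff.2 fun z hz => (hZ z hz).elim
    (fun h => ⟨iff_of_true (h.trans_lt hs.1) (h.trans_lt ht.1),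
      iff_of_true (h.trans hs.1.le) (h.trans ht.1.le)⟩)
    fun h => ⟨iff_of_false (hs.2.trans_le h).not_gt (ht.2.trans_le h).not_gt,
      iff_of_false (hs.2.trans_le h).not_ge (ht.2.trans_le h).not_ge⟩

lemma rankAmong_apply_orderIso {Z : Finset α} {e : α ≃o α} (he : ∀ z ∈ Z, e z = z) (t : α) :
    rankAmong Z (e t) = rankAmong Z t :=
  rankAmong_eq_iff.2 fun z hz =>
    ⟨by rw [← e.lt_iff_lt (x := z) (y := t), he z hz],
      by rw [← e.le_iff_le (x := z) (y := t), he z hz]⟩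

lemma exists_orderIso_of_cellwise {ι : Type*} [PartialOrder ι] {p : α → ι} (hp : Monotone p)
    {P : α → α → Prop}
    (h : ∀ a, ∃ e : α ≃o α, (∀ t, p (e t) = p t) ∧ ∀ t, p t = p a → P t (e t)) :
    ∃ e : α ≃o α, (∀ t, p (e t) = p t) ∧ ∀ t, P t (e t) := by
  choose E hEp hEP using h
  let c (i : Set.range p) : α := Set.rangeSplitting p i
  let f (t : α) : α := E (c ⟨p t, t, rfl⟩) t
  have hpf (t : α) : p (f t) = p t := hEp _ t
  have hf : StrictMono f := fun s t hst => by
    rcases (hp hst.le).eq_or_lt with h | h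
    · simpa only [f, h] using (E _).strictMono hst
    · exact hp.reflect_lt (by rwa [hpf, hpf])
  have hsurj : Function.Surjective f := fun y => by
    have hy : p ((E (c ⟨p y, y, rfl⟩)).symm y) = p y := by
      rw [← hEp (c ⟨p y, y, rfl⟩), OrderIso.apply_symm_apply]
    exact ⟨(E (c ⟨p y, y, rfl⟩)).symm y, by simp only [f, hy, OrderIso.apply_symm_apply]⟩
  exact ⟨hf.orderIsoOfSurjective f hsurj, hpf,
    fun t => hEP _ t (Set.apply_rangeSplitting p ⟨p t, t, rfl⟩).symm⟩

lemma eqOn_id_of_strictMonoOn_of_mapsTo {Z : Set α} (hZ : Z.Finite) {f : α → α}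
    (hf : StrictMonoOn f Z) (hmaps : Set.MapsTo f Z Z) : Set.EqOn f id Z := fun z hz => by
  have := hZ.to_subtype
  have hmono : StrictMono (hmaps.restrict f Z Z) := fun s t hst => hf s.2 t.2 hst
  exact congrArg Subtype.val
    (le_antisymm (hmono.apply_le (x := ⟨z, hz⟩)) (hmono.le_apply (x := ⟨z, hz⟩)))

variable {𝕜 : Type*} [Field 𝕜] [LinearOrder 𝕜] [IsStrictOrderedRing 𝕜]

lemma exists_orderIso_eqOn_Iic {c x y : 𝕜} (hx : c < x) (hy : c < y) :
    ∃ e : 𝕜 ≃o 𝕜, (∀ t ≤ c, e t = t) ∧ e x = y := by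
  have hk : 0 < (y - c) / (x - c) := div_pos (sub_pos.2 hy) (sub_pos.2 hx)
  let σ : 𝕜 ≃o 𝕜 :=
    (OrderIso.addRight (-c)).trans ((OrderIso.mulRight₀ _ hk).trans (OrderIso.addRight c))
  have hσ (t : 𝕜) : σ t = (t - c) * ((y - c) / (x - c)) + c := by simp [σ, sub_eq_add_neg]
  have hσc (t : 𝕜) : c < σ t ↔ c < t := by
    rw [hσ, lt_add_iff_pos_left, mul_pos_iff_of_pos_right hk, sub_pos]
  obtain ⟨e, -, he⟩ := exists_orderIso_of_cellwise (p := fun t => c < t)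
    (fun _ _ hst h => h.trans_le hst)
    (P := fun t u => (t ≤ c → u = t) ∧ (c < t → u = σ t)) fun a => by
      by_cases ha : c < a
      · exact ⟨σ, fun t => propext (hσc t), fun t ht =>
          ⟨fun h => absurd (ht.mpr ha) h.not_gt, fun _ => rfl⟩⟩
      · exact ⟨OrderIso.refl 𝕜, fun _ => rfl, fun t ht =>
          ⟨fun _ => rfl, fun h => absurd (ht.mp h) ha⟩⟩
  refine ⟨e, fun t => (he t).1, ?_⟩
  rw [(he x).2 hx, hσ, mul_div_cancel₀ _ (sub_pos.2 hx).ne', sub_add_cancel]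

lemma exists_orderIso_eqOn_finset {T : Finset 𝕜} {f : 𝕜 → 𝕜} (hf : StrictMonoOn f T) :
    ∃ e : 𝕜 ≃o 𝕜, ∀ t ∈ T, e t = f t := by
  induction T using Finset.induction_on_max with
  | empty => exact ⟨OrderIso.refl 𝕜, by simp⟩
  | insert m T hT ih =>
    obtain ⟨e, he⟩ := ih (hf.mono (by simp))
    rcases T.eq_empty_or_nonempty with rfl | hne
    · exact ⟨OrderIso.addRight (f m - m), by simp⟩
    · set a := T.max' hne
      have ha : a ∈ T := T.max'_mem hne
      obtain ⟨σ, hσ, hσm⟩ := exists_orderIso_eqOn_Iic (e.strictMono (hT a ha))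
        (he a ha ▸ hf (mem_insert_of_mem ha) (mem_insert_self m T) (hT a ha))
      refine ⟨e.trans σ, fun t ht => ?_⟩
      rcases mem_insert.1 ht with rfl | ht
      · exact hσm
      · rw [OrderIso.trans_apply, hσ _ (e.monotone (T.le_max' t ht)), he t ht]

lemma exists_orderIso_apply_eq_of_rankAmong_eq {W : Finset 𝕜} {x y : 𝕜}
    (h : rankAmong W x = rankAmong W y) : ∃ e : 𝕜 ≃o 𝕜, (∀ z ∈ W, e z = z) ∧ e x = y := by
  by_cases hx : x ∈ W
  · exact ⟨OrderIso.refl 𝕜, fun _ _ => rfl, (eq_of_rankAmong_eq hx h.symm).symm⟩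
  rw [rankAmong_eq_iff] at h
  have hmono : StrictMonoOn (Function.update id x y) (insert x W : Finset 𝕜) := by
    intro s hs t ht hst
    rw [mem_coe, mem_insert] at hs ht
    rcases hs with rfl | hs <;> rcases ht with rfl | ht
    · exact absurd hst (lt_irrefl _)
    · simpa [Function.update_of_ne hst.ne'] using not_le.1 fun hty => hst.not_ge ((h t ht).2.2 hty)
    · simpa [Function.update_of_ne hst.ne] using (h s hs).1.1 hst
    · simpa [Function.update_of_ne (ne_of_mem_of_not_mem hs hx),
        Function.update_of_ne (ne_of_mem_of_not_mem ht hx)] using hst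
  obtain ⟨e, he⟩ := exists_orderIso_eqOn_finset hmono
  refine ⟨e, fun z hz => ?_, ?_⟩
  · rw [he z (mem_insert_of_mem hz), Function.update_of_ne (ne_of_mem_of_not_mem hz hx), id]
  · rw [he x (mem_insert_self x W), Function.update_self]

end OrderIsomorphisms

section SignMatching

/-- The order automorphism `θ` of `ℝ` carries the sign pattern of `f` on the line to that
of `g`. -/
def SignMatch (θ : ℝ ≃o ℝ) (f g : ℝ[X]) : Prop :=
  ∀ t, sign (f.eval t) = sign (g.eval (θ t))

/-- The real roots of the nonzero members of a finite family of polynomials. -/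
noncomputable def allRoots {ι : Type*} [Fintype ι] (a : ι → ℝ[X]) : Finset ℝ :=
  univ.biUnion fun i => (a i).roots.toFinset

lemma roots_subset_allRoots {ι : Type*} [Fintype ι] (a : ι → ℝ[X]) (i : ι) :
    (a i).roots.toFinset ⊆ allRoots a :=
  subset_biUnion_of_mem (fun i => (a i).roots.toFinset) (mem_univ i)

lemma card_allRoots_le {ι : Type*} [Fintype ι] {a : ι → ℝ[X]} {D : ℕ}
    (ha : ∀ i, (a i).natDegree ≤ D) : #(allRoots a) ≤ Fintype.card ι * D :=
  card_biUnion_le_card_mul _ _ _ fun i _ =>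
    ((a i).roots.toFinset_card_le.trans (a i).card_roots').trans (ha i)

lemma sign_eq_of_isPreconnected {X : Type*} [TopologicalSpace X] {s : Set X}
    (hs : IsPreconnected s) {u : X → ℝ} (hu : ContinuousOn u s) (h0 : ∀ x ∈ s, u x ≠ 0)
    {x y : X} (hx : x ∈ s) (hy : y ∈ s) : sign (u x) = sign (u y) :=
  hs.constant (fun z hz => (continuousAt_sign_of_ne_zero (h0 z hz)).comp_continuousWithinAt
    (hu z hz)) hx hy

lemma sign_eval_eq_of_rankAmong_eq {f : ℝ[X]} {Z : Finset ℝ} (hZ : f.roots.toFinset ⊆ Z)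
    {s t : ℝ} (h : rankAmong Z s = rankAmong Z t) : sign (f.eval s) = sign (f.eval t) := by
  wlog hst : s ≤ t generalizing s t
  · exact (this h.symm (le_of_not_ge hst)).symm
  rcases eq_or_ne f 0 with rfl | hf
  · simp
  rcases hst.eq_or_lt with rfl | hst
  · rfl
  refine sign_eq_of_isPreconnected isPreconnected_Icc f.continuousOn (fun r hr h0 => ?_)
    (Set.left_mem_Icc.2 hst.le) (Set.right_mem_Icc.2 hst.le)
  obtain ⟨hlt, hle⟩ := rankAmong_eq_iff.1 h r
    (hZ (Multiset.mem_toFinset.2 ((mem_roots hf).2 h0)))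
  have hrs : r = s := le_antisymm (hle.2 hr.2) hr.1
  exact lt_irrefl s (hrs ▸ hlt.2 (hrs ▸ hst))

namespace SignMatch

variable {θ θ' : ℝ ≃o ℝ} {f g : ℝ[X]}

lemma symm (h : SignMatch θ f g) : SignMatch θ.symm g f := fun t => by
  rw [h, θ.apply_symm_apply]

lemma neg (h : SignMatch θ f g) : SignMatch θ (-f) (-g) := fun t => by
  rw [eval_neg, eval_neg, Left.sign_neg, Left.sign_neg, h]

lemma isRoot_iff (h : SignMatch θ f g) {t : ℝ} : f.IsRoot t ↔ g.IsRoot (θ t) := by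
  rw [IsRoot.def, IsRoot.def, ← sign_eq_zero_iff, h, sign_eq_zero_iff]

lemma ne_zero (h : SignMatch θ f g) (hf : f ≠ 0) : g ≠ 0 := by
  rintro rfl
  exact hf (Polynomial.funext fun t => (h.isRoot_iff.2 eval_zero).trans eval_zero.symm)

lemma apply_mem_roots (h : SignMatch θ f g) {z : ℝ} (hz : z ∈ f.roots) : θ z ∈ g.roots :=
  (Polynomial.mem_roots (h.ne_zero (ne_zero_of_mem_roots hz))).2
    (h.isRoot_iff.1 (isRoot_of_mem_roots hz))

lemma of_eqOn_roots (h : SignMatch θ f g) (hθ' : ∀ z ∈ f.roots, θ' z = θ z) :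
    SignMatch θ' f g := fun t => by
  have hfix : ∀ z ∈ f.roots.toFinset, θ'.trans θ.symm z = z := fun z hz => by
    rw [OrderIso.trans_apply, hθ' z (Multiset.mem_toFinset.1 hz), θ.symm_apply_apply]
  rw [← sign_eval_eq_of_rankAmong_eq subset_rfl (rankAmong_apply_orderIso hfix t), h,
    OrderIso.trans_apply, θ.apply_symm_apply]

lemma eqOn_roots (h : SignMatch θ f g) (h' : SignMatch θ' f g) {z : ℝ} (hz : z ∈ f.roots) :
    θ z = θ' z := by
  have hmaps : Set.MapsTo (θ.trans θ'.symm) {t | f.IsRoot t} {t | f.IsRoot t} := fun t ht =>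
    h'.isRoot_iff.2 (by simpa using h.isRoot_iff.1 ht)
  have hfix := eqOn_id_of_strictMonoOn_of_mapsTo (finite_setOfPred_isRoot (ne_zero_of_mem_roots hz))
    ((θ.trans θ'.symm).strictMono.strictMonoOn _) hmaps (isRoot_of_mem_roots hz)
  exact (θ'.symm_apply_eq).1 hfix

end SignMatch

lemma exists_signMatch_of_pairwise {ι : Type*} [Finite ι] {a b : ι → ℝ[X]}
    (h : ∀ i j, ∃ θ, SignMatch θ (a i) (b i) ∧ SignMatch θ (a j) (b j)) :
    ∃ θ, ∀ i, SignMatch θ (a i) (b i) := by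
  have := Fintype.ofFinite ι
  choose τ hl hr using h
  have hcommon (z : ℝ) : ∃ y, ∀ i j, z ∈ (a i).roots → τ i j z = y := by
    by_cases hz : ∃ k, z ∈ (a k).roots
    · obtain ⟨k, hk⟩ := hz
      exact ⟨τ k k z, fun i j hi => ((hl i j).eqOn_roots (hl i k) hi).trans
        ((hr i k).eqOn_roots (hl k k) hk)⟩
    · exact ⟨0, fun i _ hi => absurd ⟨i, hi⟩ hz⟩
  choose f hf using hcommon
  have hτ (i j : ι) {z : ℝ} (hz : z ∈ (a j).roots) : τ i j z = f z :=
    ((hr i j).eqOn_roots (hl j j) hz).trans (hf z j j hz)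
  have hmono : StrictMonoOn f (allRoots a) := fun z hz w hw hzw => by
    simp only [allRoots, coe_biUnion, Set.mem_iUnion, mem_coe, Multiset.mem_toFinset] at hz hw
    obtain ⟨⟨i, -, hi⟩, ⟨j, -, hj⟩⟩ := And.intro hz hw
    rw [← hf z i j hi, ← hτ i j hj]
    exact (τ i j).strictMono hzw
  obtain ⟨θ, hθ⟩ := exists_orderIso_eqOn_finset hmono
  exact ⟨θ, fun i => (hl i i).of_eqOn_roots fun z hz =>
    (hθ z (roots_subset_allRoots a i (Multiset.mem_toFinset.2 hz))).trans (hf z i i hz).symm⟩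

end SignMatching

section Derivative

lemma eventually_sign_eval_atTop (f : ℝ[X]) :
    ∀ᶠ t in atTop, sign (f.eval t) = sign f.leadingCoeff := by
  obtain ⟨φ, hφ, hf⟩ := f.isEquivalent_atTop_lead.exists_eq_mul
  filter_upwards [hf, hφ.eventually_const_lt one_pos, eventually_gt_atTop 0] with t ht hφt ht0
  rw [ht, Pi.mul_apply, sign_mul, sign_mul, sign_pos hφt, sign_pos (pow_pos ht0 _), one_mul,
    mul_one]

lemma eventually_sign_eval_eq_derivative_atTop {f : ℝ[X]} (hf : f.natDegree ≠ 0) :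
    ∀ᶠ t in atTop, sign (f.eval t) = sign (f.derivative.eval t) := by
  have hlead : f.derivative.leadingCoeff = f.leadingCoeff * f.natDegree := by
    rw [leadingCoeff, natDegree_derivative, coeff_derivative, ← Nat.cast_succ,
      Nat.succ_eq_add_one, Nat.sub_add_cancel (Nat.one_le_iff_ne_zero.2 hf), leadingCoeff]
  filter_upwards [eventually_sign_eval_atTop f, eventually_sign_eval_atTop f.derivative]
    with t ht ht'
  rw [ht, ht', hlead, sign_mul, sign_pos (Nat.cast_pos.2 (Nat.pos_of_ne_zero hf)), mul_one]

lemma eventually_sign_eval_eq_neg_derivative_atBot {f : ℝ[X]} (hf : f.natDegree ≠ 0) :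
    ∀ᶠ t in atBot, sign (f.eval t) = -sign (f.derivative.eval t) := by
  have hcomp : (f.comp (-X)).natDegree ≠ 0 := by rwa [natDegree_comp, natDegree_neg, natDegree_X,
    mul_one]
  filter_upwards [tendsto_neg_atBot_atTop.eventually
    (eventually_sign_eval_eq_derivative_atTop hcomp)] with t ht
  simpa [derivative_comp, Left.sign_neg] using ht

lemma sign_sub_eq_of_strictMonoOn {u : ℝ → ℝ} {s : Set ℝ} (hu : StrictMonoOn u s) {x y : ℝ}
    (hx : x ∈ s) (hy : y ∈ s) : sign (u x - u y) = sign (x - y) := by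
  rcases lt_trichotomy x y with h | rfl | h
  · rw [sign_neg (sub_neg.2 h), sign_neg (sub_neg.2 (hu hx hy h))]
  · rw [sub_self, sub_self]
  · rw [sign_pos (sub_pos.2 h), sign_pos (sub_pos.2 (hu hy hx h))]

lemma exists_sign_eq_ite_of_strictMonoOn {u : ℝ → ℝ} {a b : ℝ} (hab : a < b)
    (hu : ContinuousOn u (Set.Icc a b)) (hmono : StrictMonoOn u (Set.Icc a b)) :
    ∃ w ∈ Set.Ioo a b, ∀ t ∈ Set.Ioo a b, sign (u t) =
      if 0 ≤ sign (u a) then 1 else if sign (u b) ≤ 0 then -1 else sign (t - w) := by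
  have ha := Set.left_mem_Icc.2 hab.le
  have hb := Set.right_mem_Icc.2 hab.le
  obtain ⟨m, hm⟩ := Set.nonempty_Ioo.2 hab
  split_ifs with h₁ h₂
  · exact ⟨m, hm, fun t ht => sign_pos ((sign_nonneg_iff.1 h₁).trans_lt
      (hmono ha (Set.Ioo_subset_Icc_self ht) ht.1))⟩
  · exact ⟨m, hm, fun t ht => sign_neg ((hmono (Set.Ioo_subset_Icc_self ht) hb ht.2).trans_le
      (sign_nonpos_iff.1 h₂))⟩
  · rw [sign_nonneg_iff, not_le] at h₁
    rw [sign_nonpos_iff, not_le] at h₂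
    obtain ⟨w, hw, hw0⟩ := intermediate_value_Ioo hab.le hu ⟨h₁, h₂⟩
    refine ⟨w, hw, fun t ht => ?_⟩
    rw [← sign_sub_eq_of_strictMonoOn hmono (Set.Ioo_subset_Icc_self ht)
      (Set.Ioo_subset_Icc_self hw), hw0, sub_zero]

lemma strictMonoOn_eval_of_derivative_pos {f : ℝ[X]} {a b : ℝ}
    (hf : ∀ t ∈ Set.Ioo a b, 0 < f.derivative.eval t) :
    StrictMonoOn (fun t => f.eval t) (Set.Icc a b) :=
  strictMonoOn_of_deriv_pos (convex_Icc a b) f.continuousOn fun t ht => by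
    rw [interior_Icc] at ht
    rw [f.deriv]
    exact hf t ht

variable {f g : ℝ[X]} {θ : ℝ ≃o ℝ} {W : Finset ℝ} {a b : ℝ}

/- On a gap of `W` the two polynomials are strictly increasing and each changes sign at most once;
the automorphism moves one point of sign change to the other. -/
lemma exists_orderIso_sign_eq_of_derivative_pos (ha : a ∈ W) (hb : b ∈ W) (hab : a < b)
    (hW : ∀ z ∈ W, z ≤ a ∨ b ≤ z) (hθ : SignMatch θ f.derivative g.derivative)
    (hpos : ∀ t ∈ Set.Ioo a b, 0 < f.derivative.eval t)
    (hsign : ∀ z ∈ W, sign (f.eval z) = sign (g.eval (θ z))) :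
    ∃ e : ℝ ≃o ℝ, (∀ z ∈ W, e z = z) ∧
      ∀ t ∈ Set.Ioo a b, sign (f.eval t) = sign (g.eval (θ (e t))) := by
  have hpos' : ∀ t ∈ Set.Ioo (θ a) (θ b), 0 < g.derivative.eval t := fun t ht => by
    rw [← sign_eq_one_iff, hθ.symm t, sign_eq_one_iff]
    exact hpos _ ⟨θ.lt_symm_apply.2 ht.1, θ.symm_apply_lt.2 ht.2⟩
  obtain ⟨w, hw, hf⟩ := exists_sign_eq_ite_of_strictMonoOn hab f.continuousOn
    (strictMonoOn_eval_of_derivative_pos hpos)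
  obtain ⟨w', hw', hg⟩ := exists_sign_eq_ite_of_strictMonoOn (θ.strictMono hab) g.continuousOn
    (strictMonoOn_eval_of_derivative_pos hpos')
  have hrank : rankAmong W w = rankAmong W (θ.symm w') := rankAmong_eq_of_mem_Ioo hW hw
    ⟨θ.lt_symm_apply.2 hw'.1, θ.symm_apply_lt.2 hw'.2⟩
  obtain ⟨e, he, hew⟩ := exists_orderIso_apply_eq_of_rankAmong_eq hrank
  have hew' : θ (e w) = w' := by rw [hew, θ.apply_symm_apply]
  refine ⟨e, he, fun t ht => ?_⟩
  have het : θ (e t) ∈ Set.Ioo (θ a) (θ b) :=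
    ⟨θ.strictMono (he a ha ▸ e.strictMono ht.1), θ.strictMono (he b hb ▸ e.strictMono ht.2)⟩
  rw [hf t ht, hg _ het, hsign a ha, hsign b hb, ← hew',
    ← sign_sub_eq_of_strictMonoOn ((e.trans θ).strictMono.strictMonoOn Set.univ) trivial trivial,
    OrderIso.trans_apply, OrderIso.trans_apply]

lemma exists_orderIso_sign_eq_of_derivative_ne_zero (ha : a ∈ W) (hb : b ∈ W) (hab : a < b)
    (hW : ∀ z ∈ W, z ≤ a ∨ b ≤ z) (hθ : SignMatch θ f.derivative g.derivative)
    (hne : ∀ t ∈ Set.Ioo a b, f.derivative.eval t ≠ 0)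
    (hsign : ∀ z ∈ W, sign (f.eval z) = sign (g.eval (θ z))) :
    ∃ e : ℝ ≃o ℝ, (∀ z ∈ W, e z = z) ∧
      ∀ t ∈ Set.Ioo a b, sign (f.eval t) = sign (g.eval (θ (e t))) := by
  obtain ⟨m, hm⟩ := Set.nonempty_Ioo.2 hab
  have hconst (t : ℝ) (ht : t ∈ Set.Ioo a b) :
      sign (f.derivative.eval t) = sign (f.derivative.eval m) :=
    sign_eq_of_isPreconnected isPreconnected_Ioo f.derivative.continuousOn hne ht hm
  rcases (hne m hm).lt_or_gt with h | h
  · have hneg := exists_orderIso_sign_eq_of_derivative_pos (f := -f) (g := -g) ha hb hab hW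
      (by simpa only [derivative_neg] using hθ.neg)
      (fun t ht => by
        rw [derivative_neg, eval_neg, neg_pos, ← sign_eq_neg_one_iff, hconst t ht, sign_neg h])
      (fun z hz => by simp only [eval_neg, Left.sign_neg, hsign z hz])
    simpa only [eval_neg, Left.sign_neg, neg_inj] using hneg
  · exact exists_orderIso_sign_eq_of_derivative_pos ha hb hab hW hθ
      (fun t ht => sign_eq_one_iff.1 ((hconst t ht).trans (sign_pos h))) hsign

lemma eventually_sign_eq_atTop (hf : f.natDegree ≠ 0) (hg : g.natDegree ≠ 0)
    (hθ : SignMatch θ f.derivative g.derivative) :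
    ∀ᶠ t in atTop, sign (f.eval t) = sign (g.eval (θ t)) := by
  filter_upwards [eventually_sign_eval_eq_derivative_atTop hf,
    θ.tendsto_atTop.eventually (eventually_sign_eval_eq_derivative_atTop hg)] with t hft hgt
  rw [hft, hgt, hθ]

lemma eventually_sign_eq_atBot (hf : f.natDegree ≠ 0) (hg : g.natDegree ≠ 0)
    (hθ : SignMatch θ f.derivative g.derivative) :
    ∀ᶠ t in atBot, sign (f.eval t) = sign (g.eval (θ t)) := by
  filter_upwards [eventually_sign_eval_eq_neg_derivative_atBot hf,
    θ.tendsto_atBot.eventually (eventually_sign_eval_eq_neg_derivative_atBot hg)] with t hft hgt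
  rw [hft, hgt, hθ]

lemma SignMatch.exists_of_derivative (hf : f.natDegree ≠ 0)
    (hθ : SignMatch θ f.derivative g.derivative) {Z : Finset ℝ}
    (hZ : f.derivative.roots.toFinset ⊆ Z)
    (hsign : ∀ z ∈ Z, sign (f.eval z) = sign (g.eval (θ z))) :
    ∃ e : ℝ ≃o ℝ, (∀ z ∈ Z, e z = z) ∧ SignMatch (e.trans θ) f g := by
  have hg : g.natDegree ≠ 0 := derivative_ne_zero.1 (hθ.ne_zero (derivative_ne_zero.2 hf))
  obtain ⟨B, hB⟩ := eventually_atTop.1 (eventually_sign_eq_atTop hf hg hθ)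
  obtain ⟨A, hA⟩ := eventually_atBot.1 (eventually_sign_eq_atBot hf hg hθ)
  let W : Finset ℝ := insert A (insert B Z)
  have hAW : A ∈ W := mem_insert_self A _
  have hBW : B ∈ W := mem_insert_of_mem (mem_insert_self B Z)
  have hZW : Z ⊆ W := (subset_insert B Z).trans (subset_insert A _)
  have hsignW : ∀ z ∈ W, sign (f.eval z) = sign (g.eval (θ z)) :=
    forall_mem_insert _ _ _ |>.2 ⟨hA A le_rfl, forall_mem_insert _ _ _ |>.2 ⟨hB B le_rfl, hsign⟩⟩
  have hcell (c : ℝ) : ∃ e : ℝ ≃o ℝ, (∀ t, rankAmong W (e t) = rankAmong W t) ∧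
      ∀ t, rankAmong W t = rankAmong W c → sign (f.eval t) = sign (g.eval (θ (e t))) := by
    by_cases hc : c ∈ W
    · exact ⟨OrderIso.refl ℝ, fun _ => rfl, fun t ht => eq_of_rankAmong_eq hc ht ▸ hsignW c hc⟩
    rcases le_total c A with hcA | hAc
    · exact ⟨OrderIso.refl ℝ, fun _ => rfl, fun t ht => hA t
        (not_lt.1 fun h => hcA.not_gt ((rankAmong_eq_iff.1 ht A hAW).1.1 h))⟩
    rcases le_total B c with hBc | hcB
    · exact ⟨OrderIso.refl ℝ, fun _ => rfl, fun t ht => hB t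
        ((rankAmong_eq_iff.1 ht B hBW).2.2 hBc)⟩
    obtain ⟨a, ha, b, hb, hcab, hgap⟩ := exists_mem_Ioo_of_notMem hAW hBW hAc hcB hc
    have hne : ∀ t ∈ Set.Ioo a b, f.derivative.eval t ≠ 0 := fun t ht h0 =>
      (hgap t (hZW (hZ (Multiset.mem_toFinset.2 ((mem_roots
        (derivative_ne_zero.2 hf)).2 h0))))).elim ht.1.not_ge ht.2.not_ge
    obtain ⟨e, he, hfg⟩ := exists_orderIso_sign_eq_of_derivative_ne_zero ha hb
      (hcab.1.trans hcab.2) hgap hθ hne hsignW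
    exact ⟨e, rankAmong_apply_orderIso he, fun t ht =>
      hfg t ⟨(rankAmong_eq_iff.1 ht a ha).1.2 hcab.1, not_le.1 fun h =>
        hcab.2.not_ge ((rankAmong_eq_iff.1 ht b hb).2.1 h)⟩⟩
  obtain ⟨e, hrank, he⟩ := exists_orderIso_of_cellwise (rankAmong_mono W)
    (P := fun t u => sign (f.eval t) = sign (g.eval (θ u))) hcell
  exact ⟨e, fun z hz => eq_of_rankAmong_eq (hZW hz) (hrank z), he⟩

lemma SignMatch.exists_extension {ι : Type*} [Finite ι] {a b : ι → ℝ[X]}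
    (hθ : ∀ i, SignMatch θ (a i) (b i)) (hf : f.natDegree ≠ 0) {i₀ : ι}
    (ha : a i₀ = f.derivative) (hb : b i₀ = g.derivative)
    (hsign : ∀ i, ∀ z ∈ (a i).roots, sign (f.eval z) = sign (g.eval (θ z))) :
    ∃ θ', SignMatch θ' f g ∧ ∀ i, SignMatch θ' (a i) (b i) := by
  have := Fintype.ofFinite ι
  obtain ⟨e, he, hfg⟩ := SignMatch.exists_of_derivative hf (ha ▸ hb ▸ hθ i₀)
    (ha ▸ roots_subset_allRoots a i₀) fun z hz => by
      obtain ⟨i, -, hi⟩ := mem_biUnion.1 hz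
      exact hsign i z (Multiset.mem_toFinset.1 hi)
  exact ⟨e.trans θ, hfg, fun i => (hθ i).of_eqOn_roots fun z hz =>
    congrArg θ (he z (roots_subset_allRoots a i (Multiset.mem_toFinset.2 hz)))⟩

end Derivative

section PseudoDivision

variable {A : Type*} [CommRing A]

lemma exists_pseudo_remainder {g : A[X]} {j : ℕ} (hg : g.natDegree ≤ j) (f : A[X]) :
    ∃ (k : ℕ) (q r : A[X]), r.degree < j ∧ C (g.coeff j ^ (2 * k)) * f = q * g + r := by
  induction f using degree_lt_wf.induction with | _ f ih
  rcases lt_or_ge f.degree j with hf | hf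
  · exact ⟨0, 0, f, hf, by simp⟩
  have hf0 : f ≠ 0 := fun h => (h ▸ hf).not_gt (degree_zero (R := A) ▸ WithBot.bot_lt_coe j)
  have hjn : j ≤ f.natDegree := by rwa [degree_eq_natDegree hf0, Nat.cast_le] at hf
  let m := f.natDegree - j
  let c := g.coeff j
  let f₁ := C (c ^ 2) * f - C (c * f.leadingCoeff) * g * X ^ m
  have hlt : f₁.degree < f.degree := by
    rw [degree_eq_natDegree hf0, degree_lt_iff_coeff_zero]
    intro i hi
    have hmi : m ≤ i := (Nat.sub_le _ _).trans hi
    simp only [f₁, coeff_sub, coeff_mul_X_pow', coeff_C_mul, hmi, if_true]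
    rcases hi.eq_or_lt with rfl | hi
    · rw [Nat.sub_sub_self hjn, leadingCoeff]
      ring
    · rw [coeff_eq_zero_of_natDegree_lt hi,
        coeff_eq_zero_of_natDegree_lt (hg.trans_lt (by omega : j < i - m)), mul_zero, mul_zero,
        sub_zero]
  obtain ⟨k, q, r, hr, heq⟩ := ih f₁ hlt
  refine ⟨k + 1, q + C (c ^ (2 * k)) * C (c * f.leadingCoeff) * X ^ m, r, hr, ?_⟩
  have hpow : C (c ^ (2 * (k + 1))) = C (c ^ (2 * k)) * C (c ^ 2) := by
    rw [← C_mul, ← pow_add, mul_add, mul_one]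
  rw [hpow]
  linear_combination heq

/- The remainder has to be taken after cutting `g` off at the degree that it has after
specialization: its top coefficient then specializes to a nonzero number, and
its even powers do not change signs. -/
lemma exists_remainder_sign_eq (f g : A[X]) (j : ℕ) :
    ∃ r : A[X], r.degree < j ∧ ∀ (φ : A →+* ℝ) (z : ℝ), (g.map φ).natDegree = j →
      z ∈ (g.map φ).roots → sign ((f.map φ).eval z) = sign ((r.map φ).eval z) := by
  let g' : A[X] := PowerSeries.trunc (j + 1) (g : PowerSeries A)
  obtain ⟨k, q, r, hr, heq⟩ := exists_pseudo_remainder (g := g')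
    (Nat.lt_succ_iff.1 (PowerSeries.natDegree_trunc_lt _ j)) f
  refine ⟨r, hr, fun φ z hj hz => ?_⟩
  have hg' : g'.map φ = g.map φ := by
    ext i
    rw [coeff_map, PowerSeries.coeff_trunc, coeff_coe]
    split_ifs with hi
    · rw [coeff_map]
    · rw [map_zero, coeff_eq_zero_of_natDegree_lt (by omega)]
  have hcoeff : φ (g'.coeff j) ≠ 0 := by
    rw [← coeff_map, hg', ← hj]
    exact leadingCoeff_ne_zero.2 (ne_zero_of_mem_roots hz)
  have heval := congrArg (fun p => (p.map φ).eval z) heq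
  simp only [Polynomial.map_mul, Polynomial.map_add, map_C, eval_mul, eval_add, eval_C, hg',
    (isRoot_of_mem_roots hz).eq_zero, mul_zero, zero_add] at heval
  rw [map_pow] at heval
  rw [← heval, sign_mul, sign_pos ((even_two_mul k).pow_pos hcoeff), one_mul]

lemma natDegree_map_eq_of_sign_eq {g : A[X]} {φ ψ : A →+* ℝ}
    (h : ∀ c ∈ g.coeffs, sign (φ c) = sign (ψ c)) :
    (g.map φ).natDegree = (g.map ψ).natDegree := by
  have hsupp : (g.map φ).support = (g.map ψ).support := by
    ext i
    rw [mem_support_iff, mem_support_iff, coeff_map, coeff_map, not_iff_not]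
    by_cases hi : g.coeff i = 0
    · rw [hi, map_zero, map_zero]
    · rw [← sign_eq_zero_iff, h _ (coeff_mem_coeffs hi), sign_eq_zero_iff]
  rw [natDegree, degree, hsupp, natDegree, degree]

end PseudoDivision

section SignDetermination

variable {A : Type*} [CommRing A]

/-- Finitely many elements of `A` suffice to determine, for every specialization `φ : A →+* ℝ`,
the common sign pattern of the polynomials `f.map φ` with `f ∈ F`: specializations under which
these elements have the same signs have matching patterns. -/
def IsSignDetermined (F : Finset A[X]) : Prop :=
  ∃ G : Finset A, ∀ φ ψ : A →+* ℝ, (∀ c ∈ G, sign (φ c) = sign (ψ c)) →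
    ∃ θ, ∀ f ∈ F, SignMatch θ (f.map φ) (f.map ψ)

lemma SignMatch.map_of_natDegree_eq_zero {f : A[X]} {φ ψ : A →+* ℝ}
    (hφ : (f.map φ).natDegree = 0)
    (h : ∀ c ∈ f.coeffs, sign (φ c) = sign (ψ c)) (θ : ℝ ≃o ℝ) :
    SignMatch θ (f.map φ) (f.map ψ) := fun t => by
  have hψ : (f.map ψ).natDegree = 0 := natDegree_map_eq_of_sign_eq h ▸ hφ
  rw [eq_C_of_natDegree_eq_zero hφ, eq_C_of_natDegree_eq_zero hψ, eval_C, eval_C, coeff_map,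
    coeff_map]
  by_cases h0 : f.coeff 0 = 0
  · rw [h0, φ.map_zero, ψ.map_zero]
  · exact h _ (coeff_mem_coeffs h0)

namespace IsSignDetermined

lemma mono {F F' : Finset A[X]} (h : IsSignDetermined F) (hF : F' ⊆ F) : IsSignDetermined F' :=
  h.imp fun _ hG φ ψ hφψ => (hG φ ψ hφψ).imp fun _ hθ f hf => hθ f (hF hf)

lemma of_natDegree_eq_zero {F : Finset A[X]} (hF : ∀ f ∈ F, f.natDegree = 0) :
    IsSignDetermined F := by
  classical
  exact ⟨F.biUnion Polynomial.coeffs, fun φ ψ h => ⟨OrderIso.refl ℝ, fun f hf =>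
    SignMatch.map_of_natDegree_eq_zero (Nat.le_zero.1 (natDegree_map_le.trans (hF f hf).le))
      (fun c hc => h c (mem_biUnion.2 ⟨f, hf, hc⟩)) _⟩⟩

variable [DecidableEq A[X]]

lemma insert_of_remainders {F H : Finset A[X]} {f : A[X]} (hH : IsSignDetermined H) (hFH : F ⊆ H)
    (hf : f.derivative ∈ F)
    (hrem : ∀ g ∈ F, ∀ j ≤ g.natDegree, ∃ r ∈ H, ∀ (φ : A →+* ℝ) (z : ℝ),
      (g.map φ).natDegree = j → z ∈ (g.map φ).roots →
        sign ((f.map φ).eval z) = sign ((r.map φ).eval z)) :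
    IsSignDetermined (insert f F) := by
  classical
  obtain ⟨G, hG⟩ := hH
  refine ⟨G ∪ (insert f F).biUnion Polynomial.coeffs, fun φ ψ hφψ => ?_⟩
  obtain ⟨θ, hθ⟩ := hG φ ψ fun c hc => hφψ c (mem_union_left _ hc)
  have hcoeffs : ∀ g ∈ insert f F, ∀ c ∈ g.coeffs, sign (φ c) = sign (ψ c) := fun g hg c hc =>
    hφψ c (mem_union_right _ (mem_biUnion.2 ⟨g, hg, hc⟩))
  by_cases hdeg : (f.map φ).natDegree = 0
  · exact ⟨θ, forall_mem_insert _ _ _ |>.2 ⟨SignMatch.map_of_natDegree_eq_zero hdeg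
      (hcoeffs f (mem_insert_self f F)) θ, fun g hg => hθ g (hFH hg)⟩⟩
  have hroots : ∀ g ∈ F, ∀ z ∈ (g.map φ).roots,
      sign ((f.map φ).eval z) = sign ((f.map ψ).eval (θ z)) := fun g hg z hz => by
    have hz' : θ z ∈ (g.map ψ).roots := (hθ g (hFH hg)).apply_mem_roots hz
    obtain ⟨r, hrH, hr⟩ := hrem g hg (g.map φ).natDegree natDegree_map_le
    rw [hr φ z rfl hz, hθ r hrH, hr ψ (θ z) (natDegree_map_eq_of_sign_eq
      (hcoeffs g (mem_insert_of_mem hg))).symm hz']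
  obtain ⟨θ', hfθ', hFθ'⟩ := SignMatch.exists_extension (ι := F) (a := fun g => g.1.map φ)
    (b := fun g => g.1.map ψ) (fun g => hθ g (hFH g.2)) hdeg (i₀ := ⟨_, hf⟩)
    (derivative_map f φ).symm (derivative_map f ψ).symm fun g => hroots g g.2
  exact ⟨θ', forall_mem_insert _ _ _ |>.2 ⟨hfθ', fun g hg => hFθ' ⟨g, hg⟩⟩⟩

lemma exists_reductions {n : ℕ} {F : Finset A[X]} {f : A[X]}
    (hF : ∀ g ∈ F, g.natDegree ≤ n + 1) (hf : f.natDegree ≤ n + 1) :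
    ∃ R : Finset A[X], (∀ r ∈ R, r.natDegree ≤ n) ∧
      (IsSignDetermined (R ∪ F) → IsSignDetermined (insert f F)) := by
  choose rem hdeg hsign using exists_remainder_sign_eq f
  have hf' : f.derivative.natDegree ≤ n := (natDegree_derivative_le f).trans (by omega)
  let F' : Finset A[X] := insert f.derivative F
  have hF' : ∀ g ∈ F', g.natDegree ≤ n + 1 := forall_mem_insert _ _ _ |>.2 ⟨by omega, hF⟩
  let R : Finset A[X] :=
    insert f.derivative ((F' ×ˢ range (n + 2)).image fun x => rem x.1 x.2)
  have hR : ∀ r ∈ R, r.natDegree ≤ n := forall_mem_insert _ _ _ |>.2 ⟨hf', fun r hr => by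
    obtain ⟨⟨g, j⟩, hgj, rfl⟩ := mem_image.1 hr
    have hj : j < n + 2 := mem_range.1 (mem_product.1 hgj).2
    exact natDegree_le_iff_coeff_eq_zero.2 fun N hN => coeff_eq_zero_of_degree_lt
      ((hdeg g j).trans_le (Nat.cast_le.2 (by omega)))⟩
  refine ⟨R, hR, fun h => (h.insert_of_remainders (F := F') ?_ (mem_insert_self _ F)
    fun g hg j hj => ⟨rem g j, ?_, hsign g j⟩).mono (insert_subset_insert f (subset_insert _ F))⟩
  · exact insert_subset (mem_union_left F (mem_insert_self _ _)) subset_union_right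
  · exact mem_union_left F (mem_insert_of_mem (mem_image_of_mem (fun x => rem x.1 x.2)
      (mem_product.2 ⟨hg, mem_range.2 ((hj.trans (hF' g hg)).trans_lt n.succ.lt_succ_self)⟩ :
        (g, j) ∈ F' ×ˢ range (n + 2))))

end IsSignDetermined

theorem isSignDetermined (F : Finset A[X]) : IsSignDetermined F := by
  classical
  suffices h : ∀ (n : ℕ) (F : Finset A[X]), (∀ f ∈ F, f.natDegree ≤ n) → IsSignDetermined F from
    h (F.sup natDegree) F fun f hf => le_sup hf
  intro n
  induction n with
  | zero => exact fun F hF => .of_natDegree_eq_zero fun f hf => Nat.le_zero.1 (hF f hf)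
  | succ n ihn =>
    suffices h : ∀ F₂ : Finset A[X], (∀ f ∈ F₂, f.natDegree ≤ n + 1) → ∀ F₁ : Finset A[X],
        (∀ f ∈ F₁, f.natDegree ≤ n) → IsSignDetermined (F₁ ∪ F₂) from
      fun F hF => empty_union F ▸ h F hF ∅ (by simp)
    intro F₂
    induction F₂ using Finset.induction_on with
    | empty => exact fun _ F₁ hF₁ => by simpa using ihn F₁ hF₁
    | insert f F₂ _ ih =>
      intro hfF₂ F₁ hF₁
      obtain ⟨hf, hF₂⟩ := (forall_mem_insert _ _ _).1 hfF₂
      obtain ⟨R, hR, hred⟩ := IsSignDetermined.exists_reductions (F := F₁ ∪ F₂)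
        (fun g hg => (mem_union.1 hg).elim (fun h => (hF₁ g h).trans n.le_succ) (hF₂ g)) hf
      rw [union_insert]
      refine hred ?_
      rw [← union_assoc]
      exact ih hF₂ (R ∪ F₁) fun g hg => (mem_union.1 hg).elim (hR g) (hF₁ g)

end SignDetermination

section UniversalPolynomials

/- Sign determination for polynomials with indeterminate coefficients gives a finite set that
depends on nothing but the degree bound. -/
lemma exists_signMatch_of_sign_eq_coeffs (κ : Type*) [Finite κ] (D : ℕ) :
    ∃ G : Finset (MvPolynomial (κ × ℕ) ℝ), ∀ q q' : κ → ℝ[X],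
      (∀ s, (q s).natDegree ≤ D) → (∀ s, (q' s).natDegree ≤ D) →
      (∀ γ ∈ G, sign (MvPolynomial.eval (fun c => (q c.1).coeff c.2) γ) =
        sign (MvPolynomial.eval (fun c => (q' c.1).coeff c.2) γ)) →
      ∃ θ, ∀ s, SignMatch θ (q s) (q' s) := by
  classical
  have := Fintype.ofFinite κ
  let u (s : κ) : (MvPolynomial (κ × ℕ) ℝ)[X] :=
    ∑ i ∈ range (D + 1), C (MvPolynomial.X (s, i)) * X ^ i
  have hu (q : κ → ℝ[X]) (hq : ∀ s, (q s).natDegree ≤ D) (s : κ) :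
      (u s).map (MvPolynomial.eval fun c => (q c.1).coeff c.2) = q s := by
    simp only [u, Polynomial.map_sum, Polynomial.map_mul, map_C, MvPolynomial.eval_X,
      Polynomial.map_pow, map_X]
    exact ((q s).as_sum_range_C_mul_X_pow' (Nat.lt_succ_of_le (hq s))).symm
  obtain ⟨G, hG⟩ := isSignDetermined (univ.image u)
  refine ⟨G, fun q q' hq hq' h => ?_⟩
  obtain ⟨θ, hθ⟩ := hG _ _ h
  exact ⟨θ, fun s => hu q hq s ▸ hu q' hq' s ▸ hθ (u s) (mem_image_of_mem u (mem_univ s))⟩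

end UniversalPolynomials

section Counting

/-- The vectors of signs taken by the family `u · i` of functions on `X`. -/
def signVectors {X ι : Type*} (u : X → ι → ℝ) : Set (ι → SignType) :=
  Set.range fun x i => sign (u x i)

/-- The index sets of those functions `u · i` that have a zero on `s`, for `s` ranging over the
collection `𝒮` of subsets of `X`. -/
def hitSets {X ι : Type*} (u : X → ι → ℝ) (𝒮 : Set (Set X)) : Set (Set ι) :=
  (fun s => {i | ∃ x ∈ s, u x i = 0}) '' 𝒮

/-- The nonempty compact intervals of the real line. -/
def compactIntervals : Set (Set ℝ) := {s | ∃ l r, l ≤ r ∧ s = Set.Icc l r}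

lemma ncard_iUnion_le_of_factor {X K β : Type*} [Finite β] {κ : X → K} {T : Finset K}
    (hκ : ∀ x, κ x ∈ T) {V : X → Set β} (hV : ∀ x y, κ x = κ y → V x = V y) {M : ℕ}
    (hM : ∀ x, (V x).ncard ≤ M) : (⋃ x, V x).ncard ≤ #T * M := by
  rcases isEmpty_or_nonempty X with _ | _
  · simp
  have hsub : ⋃ x, V x ⊆ ⋃ k ∈ T, V (Function.invFun κ k) := Set.iUnion_subset fun x => by
    rw [hV x _ (Function.invFun_eq ⟨x, rfl⟩).symm]
    exact Set.subset_biUnion_of_mem (u := fun k => V (Function.invFun κ k)) (hκ x)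
  calc (⋃ x, V x).ncard
    _ ≤ (⋃ k ∈ T, V (Function.invFun κ k)).ncard := Set.ncard_le_ncard hsub
    _ ≤ ∑ k ∈ T, (V (Function.invFun κ k)).ncard := T.set_ncard_biUnion_le _
    _ ≤ #T * M := T.sum_le_card_nsmul _ _ fun k _ => hM _

lemma ncard_range_le_of_factor {X K β : Type*} [Finite β] {κ : X → K} {T : Finset K}
    (hκ : ∀ x, κ x ∈ T) {f : X → β} (hf : ∀ x y, κ x = κ y → f x = f y) :
    (Set.range f).ncard ≤ #T := by
  rw [← Set.iUnion_singleton_eq_range, ← mul_one #T]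
  exact ncard_iUnion_le_of_factor hκ (fun x y h => by rw [hf x y h])
    fun x => (Set.ncard_singleton _).le

variable {ι : Type*}

lemma SignMatch.signVectors_eq {θ : ℝ ≃o ℝ} {a b : ι → ℝ[X]} (h : ∀ i, SignMatch θ (a i) (b i)) :
    signVectors (fun t i => (a i).eval t) = signVectors fun t i => (b i).eval t := by
  have hcomp : (fun t i => sign ((a i).eval t)) = (fun t i => sign ((b i).eval t)) ∘ θ :=
    funext fun t => funext fun i => h i t
  rw [signVectors, signVectors, hcomp, θ.surjective.range_comp]

lemma SignMatch.hitSets_subset {θ : ℝ ≃o ℝ} {a b : ι → ℝ[X]} (h : ∀ i, SignMatch θ (a i) (b i)) :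
    hitSets (fun t i => (a i).eval t) compactIntervals ⊆
      hitSets (fun t i => (b i).eval t) compactIntervals := by
  rintro _ ⟨_, ⟨l, r, hlr, rfl⟩, rfl⟩
  refine ⟨_, ⟨θ l, θ r, θ.monotone hlr, rfl⟩, Set.ext fun i => ?_⟩
  rw [← θ.image_Icc]
  exact Set.exists_mem_image.trans
    (exists_congr fun t => and_congr_right fun _ => (h i).isRoot_iff.symm)

lemma SignMatch.hitSets_eq {θ : ℝ ≃o ℝ} {a b : ι → ℝ[X]} (h : ∀ i, SignMatch θ (a i) (b i)) :
    hitSets (fun t i => (a i).eval t) compactIntervals =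
      hitSets (fun t i => (b i).eval t) compactIntervals :=
  (hitSets_subset h).antisymm (hitSets_subset fun i => (h i).symm)

variable [Fintype ι] {a : ι → ℝ[X]} {D : ℕ}

lemma rankAmong_allRoots_mem_range (ha : ∀ i, (a i).natDegree ≤ D) (t : ℝ) :
    rankAmong (allRoots a) t ∈ range (2 * D * Fintype.card ι + 1) := by
  rw [mem_range, Nat.lt_succ_iff, mul_assoc, mul_comm D]
  exact (rankAmong_le _ t).trans (Nat.mul_le_mul_left 2 (card_allRoots_le ha))

lemma ncard_signVectors_eval_le (ha : ∀ i, (a i).natDegree ≤ D) :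
    (signVectors fun t i => (a i).eval t).ncard ≤ 2 * D * Fintype.card ι + 1 := by
  rw [← card_range (2 * D * Fintype.card ι + 1)]
  exact ncard_range_le_of_factor (rankAmong_allRoots_mem_range ha) fun s t h =>
    funext fun i => sign_eval_eq_of_rankAmong_eq (roots_subset_allRoots a i) h

lemma exists_mem_Icc_eval_eq_zero_iff_of_rankAmong_eq {f : ℝ[X]} {Z : Finset ℝ}
    (hZ : f.roots.toFinset ⊆ Z) {l r l' r' : ℝ} (hlr : l ≤ r) (hlr' : l' ≤ r')
    (hl : rankAmong Z l = rankAmong Z l') (hr : rankAmong Z r = rankAmong Z r') :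
    (∃ t ∈ Set.Icc l r, f.eval t = 0) ↔ ∃ t ∈ Set.Icc l' r', f.eval t = 0 := by
  rcases eq_or_ne f 0 with rfl | hf
  · exact iff_of_true ⟨l, Set.left_mem_Icc.2 hlr, eval_zero⟩
      ⟨l', Set.left_mem_Icc.2 hlr', eval_zero⟩
  refine exists_congr fun t => and_congr_left fun ht => ?_
  have htZ : t ∈ Z := hZ (Multiset.mem_toFinset.2 ((mem_roots hf).2 ht))
  exact and_congr (not_lt.symm.trans ((not_congr (rankAmong_eq_iff.1 hl t htZ).1).trans not_lt))
    (rankAmong_eq_iff.1 hr t htZ).2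

lemma ncard_hitSets_eval_le (ha : ∀ i, (a i).natDegree ≤ D) :
    (hitSets (fun t i => (a i).eval t) compactIntervals).ncard ≤
      (2 * D * Fintype.card ι + 1) ^ 2 := by
  let N := 2 * D * Fintype.card ι + 1
  let hits (q : {q : ℝ × ℝ // q.1 ≤ q.2}) : Set ι :=
    {i | ∃ t ∈ Set.Icc q.1.1 q.1.2, (a i).eval t = 0}
  have hrange : hitSets (fun t i => (a i).eval t) compactIntervals = Set.range hits := by
    ext S
    constructor
    · rintro ⟨_, ⟨l, r, hlr, rfl⟩, rfl⟩
      exact ⟨⟨(l, r), hlr⟩, rfl⟩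
    · rintro ⟨⟨⟨l, r⟩, hlr⟩, rfl⟩
      exact ⟨_, ⟨l, r, hlr, rfl⟩, rfl⟩
  calc (hitSets (fun t i => (a i).eval t) compactIntervals).ncard
    _ = (Set.range hits).ncard := by rw [hrange]
    _ ≤ #(range N ×ˢ range N) := ncard_range_le_of_factor
        (κ := fun q => (rankAmong (allRoots a) q.1.1, rankAmong (allRoots a) q.1.2))
        (fun q => mk_mem_product (rankAmong_allRoots_mem_range ha _)
          (rankAmong_allRoots_mem_range ha _))
        fun q q' h => Set.ext fun i => exists_mem_Icc_eval_eq_zero_iff_of_rankAmong_eq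
          (roots_subset_allRoots a i) q.2 q'.2 (Prod.ext_iff.1 h).1 (Prod.ext_iff.1 h).2
    _ = N ^ 2 := by rw [card_product, card_range, sq]

end Counting

section Fibers

lemma totalDegree_bind₁_le {σ τ R : Type*} [CommSemiring R] {f : σ → MvPolynomial τ R} {D : ℕ}
    (hf : ∀ s, (f s).totalDegree ≤ D) (γ : MvPolynomial σ R) :
    (MvPolynomial.bind₁ f γ).totalDegree ≤ γ.totalDegree * D := by
  conv_lhs => rw [γ.as_sum, map_sum]
  refine MvPolynomial.totalDegree_finsetSum_le fun m hm => ?_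
  rw [MvPolynomial.bind₁_monomial]
  calc (MvPolynomial.C (γ.coeff m) * ∏ s ∈ m.support, f s ^ m s).totalDegree
    _ ≤ 0 + ∑ s ∈ m.support, (f s ^ m s).totalDegree :=
        (MvPolynomial.totalDegree_mul _ _).trans
          (add_le_add (MvPolynomial.totalDegree_C _).le (MvPolynomial.totalDegree_finsetProd _ _))
    _ ≤ ∑ s ∈ m.support, m s * D := (zero_add _).trans_le (sum_le_sum fun s _ =>
        (MvPolynomial.totalDegree_pow _ _).trans (Nat.mul_le_mul_left _ (hf s)))
    _ = (m.sum fun _ n => n) * D := (sum_mul ..).symm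
    _ ≤ γ.totalDegree * D := Nat.mul_le_mul_right D (MvPolynomial.le_totalDegree hm)

variable {R : Type*} [CommSemiring R] {p : ℕ} (i : Fin (p + 1)) (Q : MvPolynomial (Fin (p + 1)) R)

/-- `Q` regarded as a polynomial in its `i`-th variable over the polynomials in the others. -/
noncomputable def polynomialInVar : (MvPolynomial (Fin p) R)[X] :=
  MvPolynomial.finSuccEquiv R p (MvPolynomial.rename i.cycleRange Q)

/-- The restriction of `Q` to the line in the `i`-th coordinate direction through the points whose
other coordinates are given by `x`. -/
noncomputable def fiber (x : Fin p → R) : R[X] :=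
  (polynomialInVar i Q).map (MvPolynomial.eval x)

lemma eval_fiber (x : Fin p → R) (t : R) :
    (fiber i Q x).eval t = MvPolynomial.eval (i.insertNth t x) Q := by
  rw [fiber, polynomialInVar, ← MvPolynomial.eval_eq_eval_mv_eval', MvPolynomial.eval_rename,
    Fin.cons_comp_cycleRange]

lemma natDegree_fiber_le (x : Fin p → R) : (fiber i Q x).natDegree ≤ Q.totalDegree :=
  natDegree_map_le.trans ((MvPolynomial.natDegree_finSuccEquiv _).trans_le
    ((MvPolynomial.degreeOf_le_totalDegree _ _).trans (MvPolynomial.totalDegree_rename_le _ _)))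

lemma totalDegree_coeff_polynomialInVar_le (n : ℕ) :
    ((polynomialInVar i Q).coeff n).totalDegree ≤ Q.totalDegree := by
  by_cases h : (polynomialInVar i Q).coeff n = 0
  · simp [h]
  · exact (Nat.le_of_add_right_le (MvPolynomial.totalDegree_coeff_finSuccEquiv_add_le _ n h)).trans
      (MvPolynomial.totalDegree_rename_le _ _)

end Fibers

section SignVectors

/- By `exists_signMatch_of_pairwise` it is enough to control the pairs of members of the family, so
that quadratically many polynomials in the remaining variables suffice. -/
lemma exists_signMatch_fiber_of_sign_eq (p D : ℕ) : ∃ N E : ℕ, ∀ (ι : Type u) [Finite ι]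
    (i : Fin (p + 1)) (a : ι → MvPolynomial (Fin (p + 1)) ℝ), (∀ j, (a j).totalDegree ≤ D) →
      ∃ b : (ι × ι) × Fin N → MvPolynomial (Fin p) ℝ, (∀ k, (b k).totalDegree ≤ E) ∧
        ∀ x y, (∀ k, sign (MvPolynomial.eval x (b k)) = sign (MvPolynomial.eval y (b k))) →
          ∃ θ, ∀ j, SignMatch θ (fiber i (a j) x) (fiber i (a j) y) := by
  obtain ⟨G, hG⟩ := exists_signMatch_of_sign_eq_coeffs (Fin 2) D
  refine ⟨#G, G.sup MvPolynomial.totalDegree * D, fun ι _ i a ha => ?_⟩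
  let pair (j : ι × ι) : Fin 2 → MvPolynomial (Fin (p + 1)) ℝ := ![a j.1, a j.2]
  have hpair (j : ι × ι) (s : Fin 2) : (pair j s).totalDegree ≤ D := by
    fin_cases s <;> exact ha _
  let coeffs (j : ι × ι) (c : Fin 2 × ℕ) : MvPolynomial (Fin p) ℝ :=
    (polynomialInVar i (pair j c.1)).coeff c.2
  let γ (n : Fin #G) : MvPolynomial (Fin 2 × ℕ) ℝ := (G.equivFin.symm n).1
  refine ⟨fun k => MvPolynomial.bind₁ (coeffs k.1) (γ k.2), fun k => ?_, fun x y hxy => ?_⟩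
  · exact (totalDegree_bind₁_le (f := coeffs k.1) (fun c =>
      (totalDegree_coeff_polynomialInVar_le i (pair k.1 c.1) c.2).trans (hpair k.1 c.1)) _).trans
      (Nat.mul_le_mul_right D (le_sup (f := MvPolynomial.totalDegree) (G.equivFin.symm k.2).2))
  have heval (j : ι × ι) (z : Fin p → ℝ) (c : MvPolynomial (Fin 2 × ℕ) ℝ) :
      MvPolynomial.eval z (MvPolynomial.bind₁ (coeffs j) c) =
        MvPolynomial.eval (fun c => (fiber i (pair j c.1) z).coeff c.2) c := by
    simp only [fiber, coeff_map]
    exact MvPolynomial.eval₂Hom_bind₁ (RingHom.id ℝ) z (coeffs j) c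
  have hdeg (j : ι × ι) (z : Fin p → ℝ) (s : Fin 2) : (fiber i (pair j s) z).natDegree ≤ D :=
    (natDegree_fiber_le _ _ _).trans (hpair j s)
  refine exists_signMatch_of_pairwise fun j₁ j₂ => ?_
  obtain ⟨θ, hθ⟩ := hG _ _ (hdeg (j₁, j₂) x) (hdeg (j₁, j₂) y) fun c hc => by
    simpa [heval, γ] using hxy ((j₁, j₂), G.equivFin ⟨c, hc⟩)
  exact ⟨θ, hθ 0, hθ 1⟩

/-- For every bound on the degrees, the number of sign vectors of `n` real polynomials in `p`
variables is `O((n + 1) ^ e)`. -/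
def SignVectorGrowth (p e : ℕ) : Prop :=
  ∀ D : ℕ, ∃ C : ℕ, ∀ (ι : Type u) [Fintype ι] (a : ι → MvPolynomial (Fin p) ℝ),
    (∀ i, (a i).totalDegree ≤ D) →
      (signVectors fun x i => MvPolynomial.eval x (a i)).ncard ≤ C * (Fintype.card ι + 1) ^ e

lemma SignVectorGrowth.exists_ncard_iUnion_fiber_le {p e : ℕ} (h : SignVectorGrowth.{u} p e)
    (D : ℕ) : ∃ C : ℕ, ∀ (ι : Type u) [Fintype ι] (i : Fin (p + 1))
      (a : ι → MvPolynomial (Fin (p + 1)) ℝ), (∀ j, (a j).totalDegree ≤ D) →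
        ∀ {β : Type u} [Finite β] (V : (ι → ℝ[X]) → Set β) (M : ℕ),
          (∀ θ f g, (∀ j, SignMatch θ (f j) (g j)) → V f = V g) →
          (∀ f, (∀ j, (f j).natDegree ≤ D) → (V f).ncard ≤ M) →
            (⋃ x, V fun j => fiber i (a j) x).ncard ≤
              C * (Fintype.card ι + 1) ^ (2 * e) * M := by
  obtain ⟨N, E, hproj⟩ := exists_signMatch_fiber_of_sign_eq.{u} p D
  obtain ⟨C, hC⟩ := h E
  refine ⟨C * (N + 1) ^ e, fun ι _ i a ha β _ V M hV hM => ?_⟩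
  obtain ⟨b, hb, hmatch⟩ := hproj ι i a ha
  let n := Fintype.card ι
  have hcard : Fintype.card ((ι × ι) × Fin N) + 1 ≤ (N + 1) * (n + 1) ^ 2 := by
    rw [Fintype.card_prod, Fintype.card_prod, Fintype.card_fin]
    change n * n * N + 1 ≤ _
    nlinarith
  let signs (x : Fin p → ℝ) (k : (ι × ι) × Fin N) : SignType := sign (MvPolynomial.eval x (b k))
  have hfin : (Set.range signs).Finite := Set.toFinite _
  calc (⋃ x, V fun j => fiber i (a j) x).ncard
    _ ≤ #hfin.toFinset * M := ncard_iUnion_le_of_factor (κ := signs)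
        (fun x => hfin.mem_toFinset.2 (Set.mem_range_self x))
        (fun x y hxy => (hmatch x y (congrFun hxy)).elim fun θ hθ => hV θ _ _ hθ)
        fun x => hM _ fun j => (natDegree_fiber_le _ _ _).trans (ha j)
    _ ≤ C * ((N + 1) * (n + 1) ^ 2) ^ e * M := by
        rw [← Set.ncard_eq_toFinset_card]
        gcongr
        exact (hC _ b hb).trans (by gcongr)
    _ = C * (N + 1) ^ e * (n + 1) ^ (2 * e) * M := by rw [mul_pow, ← pow_mul]; ring

lemma signVectors_eq_iUnion_fiber {p : ℕ} {ι : Type*} (i : Fin (p + 1))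
    (a : ι → MvPolynomial (Fin (p + 1)) ℝ) :
    signVectors (fun y j => MvPolynomial.eval y (a j)) =
      ⋃ x, signVectors fun t j => (fiber i (a j) x).eval t := by
  ext v
  simp only [signVectors, Set.mem_iUnion, Set.mem_range, eval_fiber]
  constructor
  · rintro ⟨y, rfl⟩
    exact ⟨i.removeNth y, y i, by rw [Fin.insertNth_self_removeNth]⟩
  · rintro ⟨x, t, rfl⟩
    exact ⟨_, rfl⟩

lemma signVectorGrowth_zero : SignVectorGrowth.{u} 0 0 := fun _ => ⟨1, fun ι _ a _ => by
  rw [pow_zero, mul_one]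
  exact Set.ncard_le_one_iff_subsingleton.2 (Set.subsingleton_range _)⟩

lemma SignVectorGrowth.succ {p e : ℕ} (h : SignVectorGrowth.{u} p e) :
    SignVectorGrowth.{u} (p + 1) (2 * e + 1) := fun D => by
  obtain ⟨C, hC⟩ := h.exists_ncard_iUnion_fiber_le D
  refine ⟨C * (2 * D + 1), fun ι _ a ha => ?_⟩
  let n := Fintype.card ι
  rw [signVectors_eq_iUnion_fiber 0 a]
  calc (⋃ x, signVectors fun t j => (fiber 0 (a j) x).eval t).ncard
    _ ≤ C * (n + 1) ^ (2 * e) * (2 * D * n + 1) :=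
        hC ι 0 a ha (fun f => signVectors fun t j => (f j).eval t) _
          (fun _ _ _ => SignMatch.signVectors_eq) fun _ => ncard_signVectors_eval_le
    _ ≤ C * (n + 1) ^ (2 * e) * ((2 * D + 1) * (n + 1)) := by gcongr; linarith
    _ = C * (2 * D + 1) * (n + 1) ^ (2 * e + 1) := by ring

theorem signVectorGrowth (p : ℕ) : SignVectorGrowth.{u} p (2 ^ p - 1) := by
  induction p with
  | zero => exact signVectorGrowth_zero
  | succ p ih =>
    have hexp : 2 * (2 ^ p - 1) + 1 = 2 ^ (p + 1) - 1 := by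
      have := Nat.one_le_two_pow (n := p)
      omega
    exact hexp ▸ ih.succ

end SignVectors

section AxisSegments

lemma insertNth_add_removeNth {R : Type*} [NonAssocSemiring R] {p : ℕ} (i : Fin (p + 1))
    (x : Fin (p + 1) → R) (t : R) :
    i.insertNth (x i + t) (i.removeNth x) = x + t • (Pi.single i 1 : Fin (p + 1) → R) := by
  rw [Fin.insertNth_eq_iff]
  exact ⟨by simp, funext fun j => by simp [Fin.removeNth]⟩

lemma IsAxisSegment.exists_eq_image_insertNth {p : ℕ} {s : Set (Fin (p + 1) → ℝ)}
    (hs : IsAxisSegment (p + 1) s) :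
    ∃ (i : Fin (p + 1)) (x : Fin p → ℝ), ∃ I ∈ compactIntervals,
      s = (fun t => i.insertNth t x) '' I := by
  obtain ⟨x, i, ℓ, hℓ, rfl⟩ := hs
  refine ⟨i, i.removeNth x, _, ⟨x i + 0, x i + ℓ, by gcongr, rfl⟩, ?_⟩
  rw [← Set.image_const_add_Icc, Set.image_image]
  simp only [insertNth_add_removeNth]
  exact Set.ext fun y => exists_congr fun t => and_congr_right fun _ => eq_comm

lemma hitSets_isAxisSegment_subset {p : ℕ} {ι : Type*} (a : ι → MvPolynomial (Fin (p + 1)) ℝ) :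
    hitSets (fun y j => MvPolynomial.eval y (a j)) {s | IsAxisSegment (p + 1) s} ⊆
      ⋃ i, ⋃ x, hitSets (fun t j => (fiber i (a j) x).eval t) compactIntervals := by
  rintro _ ⟨s, hs, rfl⟩
  obtain ⟨i, x, I, hI, rfl⟩ := IsAxisSegment.exists_eq_image_insertNth hs
  refine Set.mem_iUnion₂.2 ⟨i, x, I, hI, ?_⟩
  simp only [eval_fiber, Set.exists_mem_image]

theorem exists_ncard_hitSets_isAxisSegment_le (p D : ℕ) :
    ∃ C : ℕ, ∀ (ι : Type u) [Fintype ι] (a : ι → MvPolynomial (Fin p) ℝ),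
      (∀ j, (a j).totalDegree ≤ D) →
        (hitSets (fun y j => MvPolynomial.eval y (a j)) {s | IsAxisSegment p s}).ncard ≤
          C * (Fintype.card ι + 1) ^ 2 ^ p := by
  cases p with
  | zero => exact ⟨0, fun ι _ a _ => by
      have : {s | IsAxisSegment 0 s} = ∅ :=
        Set.eq_empty_of_forall_notMem fun s ⟨_, i, _⟩ => i.elim0
      simp [hitSets, this]⟩
  | succ p =>
    obtain ⟨C, hC⟩ := (signVectorGrowth p).exists_ncard_iUnion_fiber_le D
    refine ⟨(p + 1) * (C * (2 * D + 1) ^ 2), fun ι _ a ha => ?_⟩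
    let n := Fintype.card ι
    let hits (f : ι → ℝ[X]) : Set (Set ι) := hitSets (fun t j => (f j).eval t) compactIntervals
    have hexp : 2 * (2 ^ p - 1) + 2 = 2 ^ (p + 1) := by
      have := Nat.one_le_two_pow (n := p)
      omega
    have hfiber (i : Fin (p + 1)) : (⋃ x, hits fun j => fiber i (a j) x).ncard ≤
        C * (2 * D + 1) ^ 2 * (n + 1) ^ 2 ^ (p + 1) :=
      calc (⋃ x, hits fun j => fiber i (a j) x).ncard
        _ ≤ C * (n + 1) ^ (2 * (2 ^ p - 1)) * (2 * D * n + 1) ^ 2 :=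
            hC ι i a ha hits _ (fun _ _ _ => SignMatch.hitSets_eq) fun _ => ncard_hitSets_eval_le
        _ ≤ C * (n + 1) ^ (2 * (2 ^ p - 1)) * ((2 * D + 1) * (n + 1)) ^ 2 := by gcongr; linarith
        _ = C * (2 * D + 1) ^ 2 * (n + 1) ^ 2 ^ (p + 1) := by rw [← hexp, pow_add]; ring
    calc (hitSets (fun y j => MvPolynomial.eval y (a j)) {s | IsAxisSegment (p + 1) s}).ncard
      _ ≤ (⋃ i, ⋃ x, hits fun j => fiber i (a j) x).ncard :=
          Set.ncard_le_ncard (hitSets_isAxisSegment_subset a)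
      _ ≤ ∑ i, (⋃ x, hits fun j => fiber i (a j) x).ncard := Set.ncard_iUnion_le_of_fintype _
      _ ≤ (p + 1) * (C * (2 * D + 1) ^ 2 * (n + 1) ^ 2 ^ (p + 1)) := by
          simpa using sum_le_card_nsmul univ _ _ fun i _ => hfiber i
      _ = (p + 1) * (C * (2 * D + 1) ^ 2) * (n + 1) ^ 2 ^ (p + 1) := (mul_assoc _ _ _).symm

lemma card_hit_subsets_le_ncard_hitSets {p : ℕ} {𝒞 : Finset (Set (Fin p → ℝ))}
    {a : 𝒞 → MvPolynomial (Fin p) ℝ} (ha : ∀ H, H.1 = {x | MvPolynomial.eval x (a H) = 0}) :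
    Nat.card {S : Finset (Set (Fin p → ℝ)) | S ⊆ 𝒞 ∧
        ∃ s : Set (Fin p → ℝ), IsAxisSegment p s ∧ ∀ H ∈ 𝒞, (H ∈ S ↔ (H ∩ s).Nonempty)} ≤
      (hitSets (fun y H => MvPolynomial.eval y (a H)) {s | IsAxisSegment p s}).ncard := by
  rw [Nat.card_coe_set_eq]
  refine Set.ncard_le_ncard_of_injOn (fun S => {H : 𝒞 | H.1 ∈ S}) ?_ ?_
  · rintro S ⟨-, s, hs, hhit⟩
    refine ⟨s, hs, Set.ext fun H => (Iff.trans ?_ (hhit H.1 H.2).symm)⟩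
    rw [ha H]
    exact exists_congr fun x => and_comm
  · rintro S ⟨hS, -⟩ S' ⟨hS', -⟩ h
    ext H
    exact ⟨fun hH => (Set.ext_iff.1 h ⟨H, hS hH⟩).1 hH,
      fun hH => (Set.ext_iff.1 h ⟨H, hS' hH⟩).2 hH⟩

theorem hit_subsets_polynomially_many_general (d p : ℕ) :
    ∃ C : ℕ, ∀ 𝒞 : Finset (Set (Fin p → ℝ)), 𝒞.Nonempty → (∀ H ∈ 𝒞, IsAlgHypersurface d p H) →
      Nat.card {S : Finset (Set (Fin p → ℝ)) | S ⊆ 𝒞 ∧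
          ∃ s : Set (Fin p → ℝ), IsAxisSegment p s ∧ ∀ H ∈ 𝒞, (H ∈ S ↔ (H ∩ s).Nonempty)} ≤
        C * #𝒞 ^ 2 ^ p := by
  obtain ⟨C, hC⟩ := exists_ncard_hitSets_isAxisSegment_le p d
  refine ⟨C * 2 ^ 2 ^ p, fun 𝒞 hne h𝒞 => ?_⟩
  choose a _ hdeg hzero using fun H : 𝒞 => h𝒞 H.1 H.2
  calc _ ≤ C * (Fintype.card 𝒞 + 1) ^ 2 ^ p :=
        (card_hit_subsets_le_ncard_hitSets hzero).trans (hC 𝒞 a hdeg)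
    _ ≤ C * (2 * #𝒞) ^ 2 ^ p := by
        gcongr
        rw [Fintype.card_coe, two_mul]
        exact Nat.add_le_add_left hne.card_pos _
    _ = C * 2 ^ 2 ^ p * #𝒞 ^ 2 ^ p := by rw [mul_pow, mul_assoc]

end AxisSegments

/-- There is a constant `C` depending only on `d` and `p` such that, for any collection
`𝒞` of `k` algebraic hypersurfaces of degree at most `d` in `ℝ^p`, at most
`C·k^(2^p + 1)` distinct subsets of `𝒞` are hit by some axis-aligned line segment. -/
theorem hit_subsets_polynomially_many (d p : ℕ) (hd : 0 < d) (hp : 0 < p) :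
    ∃ C : ℕ, 0 < C ∧ ∀ k : ℕ, 0 < k → ∀ 𝒞 : Finset (Set (Fin p → ℝ)),
      𝒞.card = k → (∀ H ∈ 𝒞, IsAlgHypersurface d p H) →
      Nat.card {S : Finset (Set (Fin p → ℝ)) | S ⊆ 𝒞 ∧
          ∃ s : Set (Fin p → ℝ), IsAxisSegment p s ∧
            ∀ H ∈ 𝒞, (H ∈ S ↔ (H ∩ s).Nonempty)}
        ≤ C * k ^ (2 ^ p + 1) := by
  obtain ⟨C, hC⟩ := hit_subsets_polynomially_many_general d p
  refine ⟨C + 1, C.succ_pos, fun k hk 𝒞 hcard h𝒞 => (hC 𝒞 (card_pos.1 (hcard ▸ hk)) h𝒞).trans ?_⟩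
  rw [hcard]
  exact Nat.mul_le_mul C.le_succ (Nat.pow_le_pow_right hk (Nat.le_succ _))
end
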